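/- arXiv:1004.3709 — 9 statements merged into one kernel-verified Lean document; each statement's English description precedes it below -/
import Mathlib

section
/- Let A ⊆ ZMod N with A - A = ZMod N and 0 ∈ A, and let f : A → ZMod N be a Freiman homomorphism with induced function φ_f. Then f is linear if and only if φ_f is an additive group endomorphism of ZMod N, i.e., φ_f(d + d') = φ_f(d) + φ_f(d') for all d, d' ∈ ZMod N. -/
open Pointwise

/-- `f` is a Freiman homomorphism on `A ⊆ ZMod N`. -/
def IsFreimanHomOn {N : ℕ} (A : Set (ZMod N)) (f : ZMod N → ZMod N) : Prop :=
  ∀ a ∈ A, ∀ b ∈ A, ∀ c ∈ A, ∀ d ∈ A, a - b = c - d → f a - f b = f c - f d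

/-- `f` is linear on `A`: it is the restriction of `x ↦ α·x + β`. -/
def IsLinearOn {N : ℕ} (A : Set (ZMod N)) (f : ZMod N → ZMod N) : Prop :=
  ∃ α β : ZMod N, ∀ x ∈ A, f x = α * x + β

theorem linear_iff_induced_function_additive (N : ℕ) (A : Set (ZMod N))
    (hA : A - A = Set.univ) (h0 : (0 : ZMod N) ∈ A)
    (f : ZMod N → ZMod N) (hf : IsFreimanHomOn A f)
    (φ : ZMod N → ZMod N)
    (hφ : ∀ d x : ZMod N, x ∈ A → x + d ∈ A → φ d = f (x + d) - f x) :
    IsLinearOn A f ↔ ∀ d d' : ZMod N, φ (d + d') = φ d + φ d' := by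
  constructor
  · rintro ⟨α, β, h⟩
    have key : ∀ d, φ d = α * d := by
      intro d
      have hd : d ∈ A - A := hA ▸ Set.mem_univ d
      obtain ⟨a, ha, b, hb, hab⟩ := Set.mem_sub.mp hd
      have hbd : b + d = a := by rw [← hab]; ring
      rw [hφ d b hb (hbd ▸ ha), hbd, h a ha, h b hb, ← hab]
      ring
    intro d d'
    rw [key, key, key]
    ring
  · intro hadd
    let g : ZMod N →+ ZMod N := AddMonoidHom.mk' φ hadd
    have key : ∀ d, φ d = φ 1 * d := by
      intro d
      obtain ⟨n, rfl⟩ := ZMod.intCast_surjective d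
      have hg : g (n • (1 : ZMod N)) = n • g 1 := map_zsmul g n 1
      rw [zsmul_eq_mul, zsmul_eq_mul, mul_one] at hg
      change φ (n : ZMod N) = (n : ZMod N) * φ 1 at hg
      rw [hg, mul_comm]
    refine ⟨φ 1, f 0, fun x hx => ?_⟩
    have hx' := hφ x 0 h0 (by simpa using hx)
    rw [zero_add] at hx'
    rw [← key, hx']
    ring
end

section
/- Let A ⊆ ZMod N be nonempty with A - A = ZMod N. Suppose ψ : ZMod N → ZMod N satisfies ψ(d₁ + d₂) = ψ(d₁) + ψ(d₂) for every additive pair (d₁, d₂). Then there exists a Freiman homomorphism f : A → ZMod N whose induced function φ_f equals ψ. -/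
open Pointwise

theorem exists_hom_with_induced_function (N : ℕ) (A : Set (ZMod N))
    (hne : A.Nonempty) (hA : A - A = Set.univ)
    (ψ : ZMod N → ZMod N)
    (hψ : ∀ d₁ d₂ : ZMod N,
      (∃ x : ZMod N, x ∈ A ∧ x + d₁ ∈ A ∧ x + d₁ + d₂ ∈ A) →
      ψ (d₁ + d₂) = ψ d₁ + ψ d₂) :
    ∃ f : ZMod N → ZMod N, IsFreimanHomOn A f ∧
      ∀ d x : ZMod N, x ∈ A → x + d ∈ A → f (x + d) - f x = ψ d := by
  obtain ⟨a₀, ha₀⟩ := hne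
  have key : ∀ d x : ZMod N, x ∈ A → x + d ∈ A → ψ (x + d - a₀) - ψ (x - a₀) = ψ d := by
    intro d x hx hxd
    have h := hψ (x - a₀) d ⟨a₀, ha₀, by simpa using hx, by simpa using hxd⟩
    have e : x + d - a₀ = x - a₀ + d := by ring
    rw [e, h]
    ring
  refine ⟨fun x => ψ (x - a₀), ?_, key⟩
  intro a ha b hb c hc d hd h
  have h1 := key (a - b) b hb (by simpa using ha)
  have h2 := key (c - d) d hd (by simpa using hc)
  rw [add_sub_cancel] at h1 h2
  simp only
  rw [h1, h2, h]
end

section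
/- Let A ⊆ ZMod N, let a, b, c ∈ ZMod N, and let i ≥ 0 be such that Λ^i_{a,b,c}(A) > 0. Then every function φ : ZMod N → ZMod N satisfying φ(d + d') = φ(d) + φ(d') for every additive pair (d, d') also satisfies φ(c - a) = φ(b - a) + φ(c - b). -/
/-- The counting polynomials `Λ^i_{a,b,c}[t]`. -/
noncomputable def Lam (N : ℕ) : ℕ → ZMod N → ZMod N → ZMod N → (ZMod N → ℝ) → ℝ
  | 0 => fun a b c t => ∑ᶠ x : ZMod N, t (x + a) * t (x + b) * t (x + c)
  | (i + 1) => fun a b c t =>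
      ∑ᶠ z : ZMod N, Lam N i a b z t * Lam N i a z c t * Lam N i z b c t

theorem Lam_ne_zero_aux (N : ℕ) (A : Set (ZMod N)) (φ : ZMod N → ZMod N)
    (hφ : ∀ d d' : ZMod N,
      (∃ x : ZMod N, x ∈ A ∧ x + d ∈ A ∧ x + d + d' ∈ A) →
      φ (d + d') = φ d + φ d') (i : ℕ) : ∀ a b c : ZMod N,
    Lam N i a b c (A.indicator fun _ => (1 : ℝ)) ≠ 0 →
    (∃ y, y + a ∈ A ∧ y + b ∈ A) ∧ (∃ y, y + b ∈ A ∧ y + c ∈ A) ∧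
    (∃ y, y + a ∈ A ∧ y + c ∈ A) ∧ φ (c - a) = φ (b - a) + φ (c - b) := by
  induction i with
  | zero =>
    intro a b c h
    simp only [Lam] at h
    obtain ⟨x, hx⟩ : ∃ w, _ ≠ (0 : ℝ) := by_contra fun hn => h (finsum_eq_zero_of_forall_eq_zero (not_exists_not.mp hn))
    have h12 := left_ne_zero_of_mul hx
    have ha := Set.mem_of_indicator_ne_zero (left_ne_zero_of_mul h12)
    have hb := Set.mem_of_indicator_ne_zero (right_ne_zero_of_mul h12)
    have hc := Set.mem_of_indicator_ne_zero (right_ne_zero_of_mul hx)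
    refine ⟨⟨x, ha, hb⟩, ⟨x, hb, hc⟩, ⟨x, ha, hc⟩, ?_⟩
    have key := hφ (b - a) (c - b) ⟨x + a, ha, by
      rwa [show x + a + (b - a) = x + b by ring], by
      rwa [show x + a + (b - a) + (c - b) = x + c by ring]⟩
    rwa [show b - a + (c - b) = c - a by ring] at key
  | succ i ih =>
    intro a b c h
    simp only [Lam] at h
    obtain ⟨z, hz⟩ : ∃ w, _ ≠ (0 : ℝ) := by_contra fun hn => h (finsum_eq_zero_of_forall_eq_zero (not_exists_not.mp hn))
    have h12 := left_ne_zero_of_mul hz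
    obtain ⟨hab, ⟨y, hyb, hyz⟩, -, e1⟩ := ih a b z (left_ne_zero_of_mul h12)
    obtain ⟨-, -, hac, e2⟩ := ih a z c (right_ne_zero_of_mul h12)
    obtain ⟨-, hbc, -, e3⟩ := ih z b c (right_ne_zero_of_mul hz)
    refine ⟨hab, hbc, hac, ?_⟩
    have k0 := hφ 0 0 ⟨y + b, hyb, by simpa using hyb, by simpa using hyb⟩
    have k1 := hφ (z - b) (b - z) ⟨y + b, hyb, by
      rwa [show y + b + (z - b) = y + z by ring], by
      rwa [show y + b + (z - b) + (b - z) = y + b by ring]⟩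
    rw [show z - b + (b - z) = 0 by ring] at k1
    rw [add_zero] at k0
    linear_combination e1 + e2 + e3 - k1 - k0

theorem additive_of_Lam_pos (N : ℕ) (A : Set (ZMod N)) (a b c : ZMod N) (i : ℕ)
    (hΛ : 0 < Lam N i a b c (A.indicator fun _ => (1 : ℝ)))
    (φ : ZMod N → ZMod N)
    (hφ : ∀ d d' : ZMod N,
      (∃ x : ZMod N, x ∈ A ∧ x + d ∈ A ∧ x + d + d' ∈ A) →
      φ (d + d') = φ d + φ d') :
    φ (c - a) = φ (b - a) + φ (c - b) := by
  exact (Lam_ne_zero_aux N A φ hφ i a b c hΛ.ne').2.2.2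
end

section
/- Let ε be a real number with 0 < ε < 4/9, and for each N let p = p(N) = N^{-4/9+ε}. Let A be a random subset of ZMod N with parameter p. Then with high probability (as N → ∞), Λ¹_{a,b,c}(A) > 0 simultaneously for all pairwise distinct a, b, c ∈ ZMod N. -/
open MeasureTheory Filter

/-- The Bernoulli measure on `Bool` with parameter `p` (for `p ≤ 1`). -/
noncomputable def bernoulliBool (p : NNReal) : Measure Bool :=
  (p : ENNReal) • Measure.dirac true + (1 - (p : ENNReal)) • Measure.dirac false

/-- The law of a random subset of `ZMod N` (encoded as `ZMod N → Bool`) where each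
element is included independently with probability `p`. -/
noncomputable def randomSubsetMeasure (N : ℕ) (p : NNReal) : Measure (ZMod N → Bool) :=
  if h : N = 0 then 0 else
    haveI : NeZero N := ⟨h⟩
    Measure.pi fun _ => bernoulliBool p

theorem bern_prob (p : NNReal) (hp : p ≤ 1) : IsProbabilityMeasure (bernoulliBool p) := by
  constructor
  have : (p : ENNReal) ≤ 1 := by exact_mod_cast hp
  simp [bernoulliBool, add_tsub_cancel_of_le this]

instance bern_fin (p : NNReal) : IsFiniteMeasure (bernoulliBool p) := by
  constructor
  have : (1 - (p : ENNReal)) < ⊤ := lt_of_le_of_lt tsub_le_self ENNReal.one_lt_top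
  simp [bernoulliBool, this]

theorem bern_false (p : NNReal) : bernoulliBool p {false} = 1 - (p : ENNReal) := by
  simp [bernoulliBool]

theorem bern_integral (p : NNReal) (hp : p ≤ 1) (f : Bool → ℝ) :
    ∫ b, f b ∂(bernoulliBool p) = p * f true + (1 - p) * f false := by
  have : (p : ENNReal) ≤ 1 := by exact_mod_cast hp
  have h1 : (1 - (p : ENNReal)) ≠ ⊤ := (lt_of_le_of_lt tsub_le_self ENNReal.one_lt_top).ne
  rw [bernoulliBool, integral_add_measure, integral_smul_measure, integral_smul_measure,
    integral_dirac, integral_dirac, ENNReal.toReal_sub_of_le this (by simp)]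
  · simp
  · exact Integrable.smul_measure Integrable.of_finite (by simp)
  · exact Integrable.smul_measure Integrable.of_finite h1

/-- pushing a product of Bernoulli measures under `or`. -/
theorem bern_or {κ : Type*} [Fintype κ] (p q : NNReal) (hp : p ≤ 1) (hq : q ≤ 1)
    (h : 1 - (p : ENNReal) = (1 - (q : ENNReal)) ^ Fintype.card κ) :
    Measure.map (fun w : κ → Bool => (by classical exact decide (∃ j, w j = true)))
      (Measure.pi fun _ : κ => bernoulliBool q) = bernoulliBool p := by
  classical
  have := bern_prob p hp
  have := bern_prob q hq
  have hm : Measurable (fun w : κ → Bool => decide (∃ j, w j = true)) :=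
    measurable_of_finite _
  have := Measure.isProbabilityMeasure_map (μ := Measure.pi fun _ : κ => bernoulliBool q) hm.aemeasurable
  have hf : Measure.map (fun w : κ → Bool => decide (∃ j, w j = true))
      (Measure.pi fun _ : κ => bernoulliBool q) {false} = bernoulliBool p {false} := by
    rw [Measure.map_apply hm (by simp), bern_false, h]
    have : (fun w : κ → Bool => decide (∃ j, w j = true)) ⁻¹' {false}
        = Set.pi Set.univ (fun _ => {false}) := by
      ext w; simp
    rw [this, Measure.pi_pi]
    simp [bern_false]
  refine Measure.ext_of_singleton ?_
  intro b
  cases b with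
  | false => simpa using hf
  | true =>
    have : ({true} : Set Bool) = {false}ᶜ := by ext b; cases b <;> simp
    rw [this, prob_compl_eq_one_sub (by simp), prob_compl_eq_one_sub (by simp)]
    congr 1

theorem pi_comm_map {κ ι : Type*} [Fintype κ] [Fintype ι] (q : NNReal)  :
    Measure.map (fun (w : κ → ι → Bool) i j => w j i)
      (Measure.pi fun _ : κ => Measure.pi fun _ : ι => bernoulliBool q)
      = (Measure.pi fun _ : ι => Measure.pi fun _ : κ => bernoulliBool q) := by
  classical
  refine Measure.ext_of_singleton ?_
  intro w
  rw [Measure.map_apply (measurable_of_finite _) (measurableSet_singleton _)]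
  have : (fun (w : κ → ι → Bool) i j => w j i) ⁻¹' {w} = {fun j i => w i j} := by
    ext v
    simp only [Set.mem_preimage, Set.mem_singleton_iff, funext_iff]
    exact forall_comm
  rw [this]
  simp only [Measure.pi_singleton]
  exact Finset.prod_comm

theorem or_map {κ ι : Type*} [Fintype κ] [Fintype ι] (p q : NNReal) (hp : p ≤ 1) (hq : q ≤ 1)
    (h : 1 - (p : ENNReal) = (1 - (q : ENNReal)) ^ Fintype.card κ) (S : Set (ι → Bool)) :
    (Measure.pi fun _ : ι => bernoulliBool p) S =
      (Measure.pi fun _ : κ => Measure.pi fun _ : ι => bernoulliBool q)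
        {w | (fun i => (by classical exact decide (∃ j, w j i = true))) ∈ S} := by
  classical
  have := bern_prob p hp
  have := bern_prob q hq
  have h1 := Measure.pi_map_pi (μ := fun _ : ι => Measure.pi fun _ : κ => bernoulliBool q)
    (f := fun (_ : ι) (w : κ → Bool) => decide (∃ j, w j = true))
    (fun i => (measurable_of_finite _).aemeasurable)
  have h2 := bern_or (κ := κ) p q hp hq h
  simp only [h2] at h1
  rw [← h1, ← pi_comm_map, Measure.map_map (measurable_of_finite _) (measurable_of_finite _),
    Measure.map_apply (measurable_of_finite _) (Set.toFinite _).measurableSet]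
  rfl

theorem pow_bound {κ ι : Type*} [Fintype κ] [Fintype ι] (p q : NNReal) (hp : p ≤ 1) (hq : q ≤ 1)
    (h : 1 - (p : ENNReal) = (1 - (q : ENNReal)) ^ Fintype.card κ) (S : Set (ι → Bool))
    (hS : ∀ u v : ι → Bool, (∀ i, u i = true → v i = true) → v ∈ S → u ∈ S) :
    (Measure.pi fun _ : ι => bernoulliBool p) S ≤
      ((Measure.pi fun _ : ι => bernoulliBool q) S) ^ Fintype.card κ := by
  classical
  rw [or_map (κ := κ) p q hp hq h]
  have : ((Measure.pi fun _ : ι => bernoulliBool q) S) ^ Fintype.card κ =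
    (Measure.pi fun _ : κ => Measure.pi fun _ : ι => bernoulliBool q)
      (Set.pi Set.univ fun _ => S) := by
    rw [Measure.pi_pi]; simp
  rw [this]
  apply measure_mono
  intro w hw j _
  refine hS _ _ ?_ hw
  intro i hi
  simp only [decide_eq_true_eq]
  exact ⟨j, hi⟩

theorem exists_root (p : NNReal) (hp : p ≤ 1) (m : ℕ) (hm : 0 < m) :
    ∃ q : NNReal, q ≤ 1 ∧ p ≤ m * q ∧ 1 - (p : ENNReal) = (1 - (q : ENNReal)) ^ m := by
  have hs : (1 - p) ^ ((m:ℝ)⁻¹) ≤ 1 := NNReal.rpow_le_one tsub_le_self (by positivity)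
  have hpow : ((1 - p) ^ ((m:ℝ)⁻¹)) ^ m = 1 - p := NNReal.rpow_inv_natCast_pow _ hm.ne'
  set s := (1 - p) ^ ((m:ℝ)⁻¹) with hsdef
  refine ⟨1 - s, tsub_le_self, ?_, ?_⟩
  · rw [← NNReal.coe_le_coe]
    have e1 : ((1 - p : NNReal) : ℝ) = 1 - p := NNReal.coe_sub hp
    have e2 : ((1 - s : NNReal) : ℝ) = 1 - s := NNReal.coe_sub hs
    have e3 : (s : ℝ) ^ m = 1 - p := by rw [← e1, ← hpow]; simp
    have := one_add_mul_le_pow (a := (s : ℝ) - 1) (by linarith [s.coe_nonneg]) m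
    push_cast
    rw [e2]
    rw [show 1 + ((s:ℝ) - 1) = s by ring, e3] at this
    linarith
  · have : (1 : ENNReal) - ((1 - s : NNReal) : ENNReal) = (s : ENNReal) := by
      rw [← ENNReal.coe_one, ← ENNReal.coe_sub, tsub_tsub_cancel_of_le hs]
    rw [this, ← ENNReal.coe_one, ← ENNReal.coe_sub, ← hpow]; push_cast; rfl

/-- indicator weight -/
noncomputable def tv (b : Bool) : ℝ := if b = true then 1 else 0

/-- joint probability of membership of two points -/
noncomputable def E2 {ι : Type*} (r : ℝ) (x y : ι) : ℝ := by
  classical exact if x = y then r else r ^ 2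

theorem int_one {ι : Type*} [Fintype ι] (r : NNReal) (hr : r ≤ 1) (x : ι) :
    ∫ w : ι → Bool, tv (w x) ∂(Measure.pi fun _ : ι => bernoulliBool r) = r := by
  classical
  have hfun : (fun w : ι → Bool => tv (w x)) =
      fun w => ∏ i, (fun i b => if i = x then tv b else 1) i (w i) := by
    funext w
    simp
  rw [hfun, integral_fintype_prod_eq_prod (fun (i : ι) (b : Bool) => if i = x then tv b else 1)]
  have : ∀ i : ι, ∫ b, (if i = x then tv b else 1) ∂(bernoulliBool r) = if i = x then (r:ℝ) else 1 := by
    intro i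
    rw [bern_integral r hr]
    split_ifs <;> simp [tv]
  simp [this]

theorem int_two {ι : Type*} [Fintype ι] (r : NNReal) (hr : r ≤ 1) (x y : ι) :
    ∫ w : ι → Bool, tv (w x) * tv (w y) ∂(Measure.pi fun _ : ι => bernoulliBool r) = E2 (r:ℝ) x y := by
  classical
  by_cases hxy : x = y
  · subst hxy
    have : ∀ b, tv b * tv b = tv b := by intro b; cases b <;> simp [tv]
    simp only [this, int_one r hr, E2, if_true]
  have hfun : (fun w : ι → Bool => tv (w x) * tv (w y)) =
      fun w => ∏ i, (fun i b => (if i = x then tv b else 1) * (if i = y then tv b else 1)) i (w i) := by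
    funext w
    simp only [Finset.prod_mul_distrib]
    simp
  rw [hfun, integral_fintype_prod_eq_prod (fun (i : ι) (b : Bool) =>
    (if i = x then tv b else 1) * (if i = y then tv b else 1))]
  have : ∀ i : ι, ∫ b, (if i = x then tv b else 1) * (if i = y then tv b else 1) ∂(bernoulliBool r)
      = (if i = x then (r:ℝ) else 1) * (if i = y then (r:ℝ) else 1) := by
    intro i
    rw [bern_integral r hr]
    by_cases h1 : i = x
    · have : i ≠ y := fun h => hxy (h1 ▸ h)
      simp [tv, h1, hxy]
    · by_cases h2 : i = y <;> simp [tv, h1, h2]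
      have : y ≠ x := fun h => hxy h.symm
      simp [this]
  simp only [this, Finset.prod_mul_distrib]
  simp [E2, hxy, sq]

/-- positions in the pattern -/
def pos {ι : Type*} (k : Fin 3 → Fin 3 → ι) (c : Fin 3 × Fin 3) (z : ι) : ι :=
  if c.2 = 0 then z else k c.1 c.2

/-- number of coloured patterns -/
noncomputable def XX {ι : Type*} [Fintype ι] [AddCommGroup ι] (k : Fin 3 → Fin 3 → ι)
    (w : Fin 3 × Fin 3 → ι → Bool) : ℝ :=
  ∑ v : ι × (Fin 3 → ι), ∏ c : Fin 3 × Fin 3, tv (w c (v.2 c.1 + pos k c v.1))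

/-- law of nine independent random sets -/
noncomputable def P9 (ι : Type*) [Fintype ι] (r : NNReal) : Measure (Fin 3 × Fin 3 → ι → Bool) :=
  Measure.pi fun _ : Fin 3 × Fin 3 => Measure.pi fun _ : ι => bernoulliBool r

instance p9_fin (ι : Type*) [Fintype ι] (r : NNReal) : IsFiniteMeasure (P9 ι r) := by
  unfold P9; infer_instance

theorem EX1 {ι : Type*} [Fintype ι] [AddCommGroup ι] (r : NNReal) (hr : r ≤ 1)
    (k : Fin 3 → Fin 3 → ι) :
    ∫ w, XX k w ∂(P9 ι r) = (Fintype.card ι : ℝ) ^ 4 * (r:ℝ) ^ 9 := by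
  classical
  unfold XX
  rw [integral_finsetSum _ (fun _ _ => Integrable.of_finite)]
  have : ∀ v : ι × (Fin 3 → ι), ∫ w : Fin 3 × Fin 3 → ι → Bool,
      ∏ c : Fin 3 × Fin 3, tv (w c (v.2 c.1 + pos k c v.1)) ∂(P9 ι r) = (r:ℝ) ^ 9 := by
    intro v
    unfold P9
    rw [integral_fintype_prod_eq_prod (fun c (u : ι → Bool) => tv (u (v.2 c.1 + pos k c v.1)))]
    simp [int_one r hr]
  simp only [this]
  simp only [Finset.sum_const, Finset.card_univ, Fintype.card_prod, Fintype.card_fun,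
    Fintype.card_fin, nsmul_eq_mul]
  push_cast
  ring

theorem EX2 {ι : Type*} [Fintype ι] [AddCommGroup ι] (r : NNReal) (hr : r ≤ 1)
    (k : Fin 3 → Fin 3 → ι) :
    ∫ w, XX k w * XX k w ∂(P9 ι r) =
      ∑ z : ι, ∑ z' : ι, (∑ x : ι, ∑ x' : ι, E2 (r:ℝ) (x + z) (x' + z') * (E2 (r:ℝ) x x') ^ 2) ^ 3 := by
  classical
  unfold XX
  simp only [Finset.sum_mul_sum]
  rw [integral_finsetSum _ (fun _ _ => Integrable.of_finite)]
  have : ∀ v v' : ι × (Fin 3 → ι), ∫ w : Fin 3 × Fin 3 → ι → Bool,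
      (∏ c : Fin 3 × Fin 3, tv (w c (v.2 c.1 + pos k c v.1))) *
      (∏ c : Fin 3 × Fin 3, tv (w c (v'.2 c.1 + pos k c v'.1))) ∂(P9 ι r) =
      ∏ i : Fin 3, (E2 (r:ℝ) (v.2 i + v.1) (v'.2 i + v'.1) * (E2 (r:ℝ) (v.2 i) (v'.2 i)) ^ 2) := by
    intro v v'
    unfold P9
    simp only [← Finset.prod_mul_distrib]
    rw [integral_fintype_prod_eq_prod (fun c (u : ι → Bool) =>
      tv (u (v.2 c.1 + pos k c v.1)) * tv (u (v'.2 c.1 + pos k c v'.1)))]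
    simp only [int_two r hr]
    rw [Fintype.prod_prod_type]
    refine Finset.prod_congr rfl fun i _ => ?_
    rw [Fin.prod_univ_three]
    simp only [pos, E2, add_left_inj, Fin.isValue, if_true, one_ne_zero, if_false,
      show (2 : Fin 3) ≠ 0 by decide]
    ring
  have h2 : ∀ v : ι × (Fin 3 → ι), ∫ w : Fin 3 × Fin 3 → ι → Bool, ∑ v' : ι × (Fin 3 → ι),
      (∏ c : Fin 3 × Fin 3, tv (w c (v.2 c.1 + pos k c v.1))) *
      (∏ c : Fin 3 × Fin 3, tv (w c (v'.2 c.1 + pos k c v'.1))) ∂(P9 ι r) =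
      ∑ v' : ι × (Fin 3 → ι), ∏ i : Fin 3, (E2 (r:ℝ) (v.2 i + v.1) (v'.2 i + v'.1) * (E2 (r:ℝ) (v.2 i) (v'.2 i)) ^ 2) := by
    intro v
    rw [integral_finsetSum _ (fun _ _ => Integrable.of_finite)]
    simp only [this]
  simp only [h2]
  simp only [Fintype.sum_prod_type]
  refine Finset.sum_congr rfl fun z _ => ?_
  rw [Finset.sum_comm]
  refine Finset.sum_congr rfl fun z' _ => ?_
  have := Fintype.prod_sum (fun (_ : Fin 3) (x : ι) =>
    ∑ x' : ι, E2 (r:ℝ) (x + z) (x' + z') * (E2 (r:ℝ) x x') ^ 2)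
  simp only [Finset.prod_const, Finset.card_univ, Fintype.card_fin] at this
  rw [this]
  refine Finset.sum_congr rfl fun f _ => ?_
  rw [Fintype.prod_sum]

theorem inner_bound {ι : Type*} [Fintype ι] [AddCommGroup ι] (r : ℝ) (h0 : 0 ≤ r) (hr : r ≤ 1)
    (z z' : ι) (hz : z ≠ z') :
    ∑ x : ι, ∑ x' : ι, E2 r (x + z) (x' + z') * (E2 r x x') ^ 2 ≤
      (Fintype.card ι : ℝ) ^ 2 * r ^ 6 + 2 * (Fintype.card ι : ℝ) * r ^ 4 := by
  classical
  have : ∀ x x' : ι, E2 r (x + z) (x' + z') * (E2 r x x') ^ 2 ≤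
      r ^ 6 + (if x = x' then r ^ 4 else 0) + (if x + z - z' = x' then r ^ 4 else 0) := by
    intro x x'
    have h5 : r ^ 5 ≤ r ^ 4 := pow_le_pow_of_le_one h0 hr (by norm_num)
    have h6 : 0 ≤ r ^ 6 := by positivity
    have h4 : 0 ≤ r ^ 4 := by positivity
    by_cases h1 : x = x'
    · subst h1
      have : ¬ (x + z = x + z') := by simpa using hz
      have h' : ¬ (x + z - z' = x) := by
        intro h; apply this; rw [sub_eq_iff_eq_add] at h; exact h
      simp only [E2, if_true, this, if_false, h']
      nlinarith
    · by_cases h2 : x + z = x' + z'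
      · have h' : x + z - z' = x' := by rw [h2]; abel
        simp only [E2, h1, h2, if_true, if_false]
        simp only [add_sub_cancel_right, if_true]
        nlinarith
      · have h' : ¬ (x + z - z' = x') := by
          intro h; apply h2; rw [sub_eq_iff_eq_add] at h; exact h
        simp only [E2, h1, h2, h', if_false]
        nlinarith
  refine (Finset.sum_le_sum fun x _ => Finset.sum_le_sum fun x' _ => this x x').trans ?_
  simp only [Finset.sum_add_distrib, Finset.sum_ite_eq, Finset.mem_univ, if_true, Finset.sum_const,
    Finset.card_univ, nsmul_eq_mul]
  apply le_of_eq
  ring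

theorem inner_bound' {ι : Type*} [Fintype ι] [AddCommGroup ι] (r : ℝ) (h0 : 0 ≤ r)
    (z : ι) :
    ∑ x : ι, ∑ x' : ι, E2 r (x + z) (x' + z) * (E2 r x x') ^ 2 ≤
      (Fintype.card ι : ℝ) ^ 2 * r ^ 6 + (Fintype.card ι : ℝ) * r ^ 3 := by
  classical
  have : ∀ x x' : ι, E2 r (x + z) (x' + z) * (E2 r x x') ^ 2 ≤
      r ^ 6 + (if x = x' then r ^ 3 else 0) := by
    intro x x'
    have h6 : 0 ≤ r ^ 6 := by positivity
    by_cases h1 : x = x'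
    · subst h1
      simp only [E2, if_true]
      nlinarith
    · simp only [E2, h1, add_left_inj, if_false]
      nlinarith
  refine (Finset.sum_le_sum fun x _ => Finset.sum_le_sum fun x' _ => this x x').trans ?_
  simp only [Finset.sum_add_distrib, Finset.sum_ite_eq, Finset.mem_univ, if_true, Finset.sum_const,
    Finset.card_univ, nsmul_eq_mul]
  apply le_of_eq
  ring

theorem E2_nonneg {ι : Type*} (r : ℝ) (h0 : 0 ≤ r) (x y : ι) : 0 ≤ E2 r x y := by
  classical
  unfold E2; split_ifs <;> positivity

theorem EX2_bound {ι : Type*} [Fintype ι] [AddCommGroup ι] (r : NNReal) (hr : r ≤ 1)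
    (k : Fin 3 → Fin 3 → ι) (n : ℝ) (hn : n = Fintype.card ι) :
    ∫ w, XX k w * XX k w ∂(P9 ι r) ≤
      n ^ 2 * (n ^ 2 * (r:ℝ) ^ 6 + 2 * n * (r:ℝ) ^ 4) ^ 3 +
        n * (n ^ 2 * (r:ℝ) ^ 6 + n * (r:ℝ) ^ 3) ^ 3 := by
  classical
  subst hn
  rw [EX2 r hr]
  have h0 : (0:ℝ) ≤ r := r.coe_nonneg
  have h1 : (r:ℝ) ≤ 1 := by exact_mod_cast hr
  set n : ℝ := (Fintype.card ι : ℝ)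
  have hn0 : 0 ≤ n := Nat.cast_nonneg _
  have nn : ∀ z z' : ι, 0 ≤ ∑ x : ι, ∑ x' : ι, E2 (r:ℝ) (x + z) (x' + z') * (E2 (r:ℝ) x x') ^ 2 := by
    intro z z'
    refine Finset.sum_nonneg fun x _ => Finset.sum_nonneg fun x' _ => ?_
    have := E2_nonneg (r:ℝ) h0 (x + z) (x' + z')
    positivity
  have : ∀ z z' : ι, (∑ x : ι, ∑ x' : ι, E2 (r:ℝ) (x + z) (x' + z') * (E2 (r:ℝ) x x') ^ 2) ^ 3 ≤
      (n ^ 2 * (r:ℝ) ^ 6 + 2 * n * (r:ℝ) ^ 4) ^ 3 +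
      (if z = z' then (n ^ 2 * (r:ℝ) ^ 6 + n * (r:ℝ) ^ 3) ^ 3 else 0) := by
    intro z z'
    by_cases hz : z = z'
    · subst hz
      simp only [if_true]
      have := pow_le_pow_left₀ (nn z z) (inner_bound' (r:ℝ) h0 z) 3
      have h' : 0 ≤ (n ^ 2 * (r:ℝ) ^ 6 + 2 * n * (r:ℝ) ^ 4) ^ 3 := by positivity
      linarith
    · simp only [hz, if_false, add_zero]
      exact pow_le_pow_left₀ (nn z z') (inner_bound (r:ℝ) h0 h1 z z' hz) 3
  refine (Finset.sum_le_sum fun x _ => Finset.sum_le_sum fun x' _ => this x x').trans ?_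
  simp only [Finset.sum_add_distrib, Finset.sum_ite_eq, Finset.mem_univ, if_true, Finset.sum_const,
    Finset.card_univ, nsmul_eq_mul]
  apply le_of_eq
  ring

theorem chebyshev {ι : Type*} [Fintype ι] [Nonempty ι] [AddCommGroup ι] (r : NNReal) (hr : r ≤ 1)
    (hr0 : 0 < r) (k : Fin 3 → Fin 3 → ι) (n : ℝ) (hn : n = Fintype.card ι) :
    (P9 ι r).real {w | XX k w = 0} ≤
      (1 + 2 / (n * (r:ℝ) ^ 2)) ^ 3 - 1 + (1 + 1 / (n * (r:ℝ) ^ 3)) ^ 3 / n := by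
  classical
  have := bern_prob r hr
  have hP : IsProbabilityMeasure (P9 ι r) := by unfold P9; infer_instance
  have h2 := EX2_bound r hr k n hn
  have h1 := EX1 r hr k
  rw [← hn] at h1
  have hn0 : 0 < n := by rw [hn]; exact_mod_cast Fintype.card_pos
  have hr0' : (0:ℝ) < r := by exact_mod_cast hr0
  set μ : ℝ := n ^ 4 * (r:ℝ) ^ 9 with hμ
  have hμ0 : 0 < μ := by positivity
  have key : μ ^ 2 * (P9 ι r).real {w | XX k w = 0} ≤
      ∫ w, (XX k w * XX k w - 2 * μ * XX k w + μ ^ 2) ∂(P9 ι r) := by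
    have e : μ ^ 2 * (P9 ι r).real {w | XX k w = 0} =
        ∫ w, Set.indicator {w | XX k w = 0} (fun _ => μ ^ 2) w ∂(P9 ι r) := by
      rw [integral_indicator (Set.toFinite _).measurableSet]
      simp [mul_comm]
    rw [e]
    refine integral_mono Integrable.of_finite Integrable.of_finite ?_
    intro w
    by_cases hw : XX k w = 0
    · simp [Set.indicator, hw]
    · simp only [Set.indicator, Set.mem_ofPred_eq, hw, if_false]
      nlinarith [sq_nonneg (XX k w - μ)]
  rw [integral_add Integrable.of_finite Integrable.of_finite,
    integral_sub Integrable.of_finite Integrable.of_finite, integral_const_mul, h1] at key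
  simp only [integral_const, probReal_univ, one_smul] at key
  have k2 : μ ^ 2 * (P9 ι r).real {w | XX k w = 0} ≤
     μ ^ 2 * ((1 + 2 / (n * (r:ℝ) ^ 2)) ^ 3 - 1 + (1 + 1 / (n * (r:ℝ) ^ 3)) ^ 3 / n) := by
    have e : μ ^ 2 * ((1 + 2 / (n * (r:ℝ) ^ 2)) ^ 3 - 1 + (1 + 1 / (n * (r:ℝ) ^ 3)) ^ 3 / n) =
      n ^ 2 * (n ^ 2 * (r:ℝ) ^ 6 + 2 * n * (r:ℝ) ^ 4) ^ 3 +
        n * (n ^ 2 * (r:ℝ) ^ 6 + n * (r:ℝ) ^ 3) ^ 3 - μ ^ 2 := by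
      rw [hμ]
      field_simp
      ring
    rw [e]
    nlinarith
  exact le_of_mul_le_mul_left k2 (by positivity)

/-- the good event -/
def good {ι : Type*} [AddCommGroup ι] (k : Fin 3 → Fin 3 → ι) : Set (ι → Bool) :=
  {u | ∃ v : ι × (Fin 3 → ι), ∀ c : Fin 3 × Fin 3, u (v.2 c.1 + pos k c v.1) = true}

theorem good_bound {ι : Type*} [Fintype ι] [AddCommGroup ι] (p q r : NNReal)
    (hp : p ≤ 1) (hq : q ≤ 1) (hr : r ≤ 1) (hr0 : 0 < r) (m : ℕ)
    (h1 : 1 - (p : ENNReal) = (1 - (q : ENNReal)) ^ m)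
    (h2 : 1 - (q : ENNReal) = (1 - (r : ENNReal)) ^ 9)
    (k : Fin 3 → Fin 3 → ι) (n : ℝ) (hn : n = Fintype.card ι) :
    (Measure.pi fun _ : ι => bernoulliBool p) (good k)ᶜ ≤
      (ENNReal.ofReal ((1 + 2 / (n * (r:ℝ) ^ 2)) ^ 3 - 1 + (1 + 1 / (n * (r:ℝ) ^ 3)) ^ 3 / n)) ^ m := by
  classical
  have b1 := pow_bound (κ := Fin m) p q hp hq (by simpa using h1) (good k)ᶜ (by
    rintro u v huv hv ⟨a, ha⟩
    exact hv ⟨a, fun c => huv _ (ha c)⟩)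
  rw [Fintype.card_fin] at b1
  refine b1.trans (pow_le_pow_left' ?_ m)
  rw [or_map (κ := Fin 3 × Fin 3) q r hq hr (by simpa using h2)]
  have hc := chebyshev r hr hr0 k n hn
  have := ENNReal.ofReal_le_ofReal hc
  rw [ofReal_measureReal] at this
  refine le_trans (measure_mono ?_) this
  intro w hw
  simp only [Set.mem_ofPred_eq, XX]
  refine Finset.sum_eq_zero fun v _ => ?_
  by_contra hne
  apply hw
  refine ⟨v, fun c => ?_⟩
  simp only [decide_eq_true_eq]
  refine ⟨c, ?_⟩
  by_contra hcc
  exact hne (Finset.prod_eq_zero (Finset.mem_univ c) (by simp [tv, hcc]))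

theorem num_bound (ε n r M δ : ℝ) (hn : 1 ≤ n) (hr : 0 < r) (hM : 0 < M)
    (hδ0 : 0 ≤ δ) (hδ : δ ≤ 1 / 9) (hδ' : δ ≤ 9 * ε) (hp : n ^ (-(4:ℝ)/9 + ε) ≤ M * r) :
    (1 + 2 / (n * r ^ 2)) ^ 3 - 1 + (1 + 1 / (n * r ^ 3)) ^ 3 / n ≤
      ((1 + 2 * M ^ 2) ^ 3 + 4 * (1 + M ^ 9)) * n ^ (-δ) := by
  have hn0 : 0 < n := by linarith
  set p := n ^ (-(4:ℝ)/9 + ε) with hpdef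
  have hp0 : 0 < p := Real.rpow_pos_of_pos hn0 _
  have hrinv : 1 / r ≤ M / p := by
    rw [div_le_div_iff₀ hr hp0]; linarith
  have hri0 : 0 ≤ 1 / r := by positivity
  have hs1 : n ^ (-δ) ≤ 1 := Real.rpow_le_one_of_one_le_of_nonpos hn (by linarith)
  have hs0 : 0 < n ^ (-δ) := Real.rpow_pos_of_pos hn0 _
  have A : 2 / (n * r ^ 2) ≤ 2 * M ^ 2 * n ^ (-δ) := by
    have h2 : (1 / r) ^ 2 ≤ (M / p) ^ 2 := pow_le_pow_left₀ hri0 hrinv 2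
    have e : 1 / (n * p ^ 2) ≤ n ^ (-δ) := by
      have : n * p ^ 2 = n ^ (1 + (-(4:ℝ)/9 + ε) * 2) := by
        rw [Real.rpow_add hn0, Real.rpow_one, Real.rpow_mul hn0.le, ← hpdef]; norm_cast
      rw [this, one_div, ← Real.rpow_neg hn0.le]
      exact Real.rpow_le_rpow_of_exponent_le hn (by linarith)
    calc 2 / (n * r ^ 2) = 2 / n * (1 / r) ^ 2 := by field_simp
      _ ≤ 2 / n * (M / p) ^ 2 := by gcongr
      _ = 2 * M ^ 2 * (1 / (n * p ^ 2)) := by field_simp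
      _ ≤ _ := by gcongr
  have B : (1 / (n * r ^ 3)) ^ 3 / n ≤ M ^ 9 * n ^ (-δ) := by
    have h2 : (1 / r) ^ 9 ≤ (M / p) ^ 9 := pow_le_pow_left₀ hri0 hrinv 9
    have e : 1 / (n ^ 4 * p ^ 9) ≤ n ^ (-δ) := by
      have : n ^ 4 * p ^ 9 = n ^ ((4:ℝ) + (-(4:ℝ)/9 + ε) * 9) := by
        rw [Real.rpow_add hn0, Real.rpow_mul hn0.le, ← hpdef]; norm_cast
      rw [this, one_div, ← Real.rpow_neg hn0.le]
      exact Real.rpow_le_rpow_of_exponent_le hn (by linarith)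
    calc (1 / (n * r ^ 3)) ^ 3 / n = 1 / n ^ 4 * (1 / r) ^ 9 := by field_simp
      _ ≤ 1 / n ^ 4 * (M / p) ^ 9 := by gcongr
      _ = M ^ 9 * (1 / (n ^ 4 * p ^ 9)) := by field_simp
      _ ≤ _ := by gcongr
  have C : 1 / n ≤ n ^ (-δ) := by
    rw [one_div, ← Real.rpow_neg_one]
    exact Real.rpow_le_rpow_of_exponent_le hn (by linarith)
  set s := n ^ (-δ)
  have D : (1 + 2 / (n * r ^ 2)) ^ 3 - 1 ≤ (1 + 2 * M ^ 2) ^ 3 * s := by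
    have h1 : (1 + 2 / (n * r ^ 2)) ^ 3 ≤ (1 + 2 * M ^ 2 * s) ^ 3 := by gcongr
    set a := 2 * M ^ 2
    have ha : 0 ≤ a := by positivity
    have h3 : (1 + a * s) ^ 3 - 1 = s * (3 * a + 3 * a ^ 2 * s + a ^ 3 * (s * s)) := by ring
    have h4 : 3 * a + 3 * a ^ 2 * s + a ^ 3 * (s * s) ≤ 3 * a + 3 * a ^ 2 * 1 + a ^ 3 * (1 * 1) := by
      gcongr
    have h5 : s * (3 * a + 3 * a ^ 2 * s + a ^ 3 * (s * s)) ≤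
      s * (3 * a + 3 * a ^ 2 * 1 + a ^ 3 * (1 * 1)) := by gcongr
    nlinarith
  have F : (1 + 1 / (n * r ^ 3)) ^ 3 / n ≤ 4 * (1 + M ^ 9) * s := by
    set y := 1 / (n * r ^ 3)
    have hy : 0 ≤ y := by positivity
    have h1 : (1 + y) ^ 3 ≤ 4 * (1 + y ^ 3) := by
      nlinarith [mul_nonneg (add_nonneg zero_le_one hy) (sq_nonneg (1 - y))]
    calc (1 + y) ^ 3 / n ≤ 4 * (1 + y ^ 3) / n := by gcongr
      _ = 4 * (1 / n + y ^ 3 / n) := by ring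
      _ ≤ 4 * (s + M ^ 9 * s) := by gcongr
      _ = _ := by ring
  nlinarith

/-- offsets of the three triples -/
def offs {ι : Type*} (a b c : ι) : Fin 3 → Fin 3 → ι :=
  ![![a, a, b], ![a, a, c], ![a, b, c]]

theorem good_sub (N : ℕ) [NeZero N] (a b c : ZMod N) (u : ZMod N → Bool)
    (hu : u ∈ good (offs a b c)) :
    0 < Lam N 1 a b c (Set.indicator {x : ZMod N | u x = true} fun _ => (1 : ℝ)) := by
  obtain ⟨⟨z, f⟩, hv⟩ := hu
  set t : ZMod N → ℝ := Set.indicator {x : ZMod N | u x = true} fun _ => (1 : ℝ) with ht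
  have t0 : ∀ x, 0 ≤ t x := fun x => Set.indicator_nonneg (fun _ _ => zero_le_one) x
  have t1 : ∀ x, u x = true → t x = 1 := by
    intro x hx
    simp [ht, Set.indicator, hx]
  have L0 : ∀ a b c, 0 ≤ Lam N 0 a b c t := by
    intro a b c
    simp only [Lam]
    exact finsum_nonneg fun x => mul_nonneg (mul_nonneg (t0 _) (t0 _)) (t0 _)
  have L1 : ∀ a b c x, u (x + a) = true → u (x + b) = true → u (x + c) = true →
      0 < Lam N 0 a b c t := by
    intro a b c x h1 h2 h3
    simp only [Lam]
    refine finsum_pos (fun x => mul_nonneg (mul_nonneg (t0 _) (t0 _)) (t0 _)) ⟨x, ?_⟩ (Set.toFinite _)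
    rw [t1 _ h1, t1 _ h2, t1 _ h3]; norm_num
  have h00 := hv (0, 0)
  have h01 := hv (0, 1)
  have h02 := hv (0, 2)
  have h10 := hv (1, 0)
  have h11 := hv (1, 1)
  have h12 := hv (1, 2)
  have h20 := hv (2, 0)
  have h21 := hv (2, 1)
  have h22 := hv (2, 2)
  simp [pos, offs] at h00 h01 h02 h10 h11 h12 h20 h21 h22
  have : Lam N 1 a b c t = ∑ᶠ z : ZMod N, Lam N 0 a b z t * Lam N 0 a z c t * Lam N 0 z b c t := rfl
  rw [this]
  refine finsum_pos (fun z => mul_nonneg (mul_nonneg (L0 _ _ _) (L0 _ _ _)) (L0 _ _ _)) ⟨z, ?_⟩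
    (Set.toFinite _)
  exact mul_pos (mul_pos (L1 a b z (f 0) h01 h02 h00) (L1 a z c (f 1) h11 h10 h12))
    (L1 z b c (f 2) h20 h21 h22)

theorem Lam_one_pos_whp (ε : ℝ) (hε0 : 0 < ε) (hε : ε < 4/9) :
    Tendsto
      (fun N : ℕ =>
        randomSubsetMeasure N (Real.toNNReal ((N : ℝ) ^ (-(4:ℝ)/9 + ε)))
          {ω | ∀ a b c : ZMod N, a ≠ b → a ≠ c → b ≠ c →
            0 < Lam N 1 a b c (Set.indicator {x : ZMod N | ω x = true} fun _ => (1 : ℝ))})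
      atTop (nhds 1) := by
  set δ : ℝ := min (1 / 9) (9 * ε) with hδdef
  have hδ0 : 0 < δ := lt_min (by norm_num) (by linarith)
  have hδ1 : δ ≤ 1 / 9 := min_le_left _ _
  have hδ2 : δ ≤ 9 * ε := min_le_right _ _
  obtain ⟨m, hm⟩ := exists_nat_gt (3 / δ)
  have hm3 : 3 < δ * m := by rwa [div_lt_iff₀' hδ0] at hm
  have hm0 : 0 < m := by
    rcases Nat.eq_zero_or_pos m with h | h
    · subst h; norm_num at hm3
    · exact h
  set M : ℝ := 9 * m with hM
  have hM0 : 0 < M := by positivity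
  set K : ℝ := (1 + 2 * M ^ 2) ^ 3 + 4 * (1 + M ^ 9) with hK
  have hK0 : 0 ≤ K := by positivity
  have main : ∀ N : ℕ, 1 ≤ N →
      1 - ENNReal.ofReal (K ^ m * (N : ℝ) ^ (-(δ * m - 3))) ≤
        randomSubsetMeasure N (Real.toNNReal ((N : ℝ) ^ (-(4:ℝ)/9 + ε)))
          {ω | ∀ a b c : ZMod N, a ≠ b → a ≠ c → b ≠ c →
            0 < Lam N 1 a b c (Set.indicator {x : ZMod N | ω x = true} fun _ => (1 : ℝ))} ∧
        randomSubsetMeasure N (Real.toNNReal ((N : ℝ) ^ (-(4:ℝ)/9 + ε)))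
          {ω | ∀ a b c : ZMod N, a ≠ b → a ≠ c → b ≠ c →
            0 < Lam N 1 a b c (Set.indicator {x : ZMod N | ω x = true} fun _ => (1 : ℝ))} ≤ 1 := by
    intro N hN
    have hNne : N ≠ 0 := by omega
    haveI : NeZero N := ⟨hNne⟩
    have hn : (1:ℝ) ≤ N := by exact_mod_cast hN
    have hn0 : (0:ℝ) < N := by linarith
    have hpp : 0 < (N : ℝ) ^ (-(4:ℝ)/9 + ε) := Real.rpow_pos_of_pos hn0 _
    have hp1 : (N : ℝ) ^ (-(4:ℝ)/9 + ε) ≤ 1 :=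
      Real.rpow_le_one_of_one_le_of_nonpos hn (by linarith)
    set p : NNReal := Real.toNNReal ((N : ℝ) ^ (-(4:ℝ)/9 + ε)) with hp
    have hple : p ≤ 1 := by rw [hp]; exact Real.toNNReal_le_one.mpr hp1
    have hpc : (p : ℝ) = (N : ℝ) ^ (-(4:ℝ)/9 + ε) := Real.coe_toNNReal _ hpp.le
    obtain ⟨q, hq1, hpq, hq⟩ := exists_root p hple m hm0
    obtain ⟨r, hr1, hqr, hr⟩ := exists_root q hq1 9 (by norm_num)
    have hpr : (N : ℝ) ^ (-(4:ℝ)/9 + ε) ≤ M * r := by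
      rw [← hpc, hM]
      have a1 : (p : ℝ) ≤ m * q := by exact_mod_cast hpq
      have a2 : (q : ℝ) ≤ 9 * r := by exact_mod_cast hqr
      have : (m : ℝ) * q ≤ m * (9 * r) := by gcongr
      linarith
    have hr0' : (0:ℝ) < r := by
      by_contra h
      push Not at h
      nlinarith
    have hr0 : 0 < r := by exact_mod_cast hr0'
    have hmeas : randomSubsetMeasure N p = Measure.pi fun _ => bernoulliBool p := by
      unfold randomSubsetMeasure
      rw [dif_neg hNne]
    rw [hmeas]
    have := bern_prob p hple
    refine ⟨?_, prob_le_one⟩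
    set G := {ω : ZMod N → Bool | ∀ a b c : ZMod N, a ≠ b → a ≠ c → b ≠ c →
            0 < Lam N 1 a b c (Set.indicator {x : ZMod N | ω x = true} fun _ => (1 : ℝ))} with hG
    have hsub : (⋃ v : ZMod N × ZMod N × ZMod N, (good (offs v.1 v.2.1 v.2.2))ᶜ)ᶜ ⊆ G := by
      intro u hu a b c _ _ _
      apply good_sub
      by_contra h
      exact hu (Set.mem_iUnion.mpr ⟨(a, b, c), h⟩)
    refine le_trans ?_ (measure_mono hsub)
    rw [prob_compl_eq_one_sub (Set.toFinite _).measurableSet]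
    refine tsub_le_tsub_left ?_ 1
    refine (measure_iUnion_fintype_le _ _).trans ?_
    have hb : ∀ v : ZMod N × ZMod N × ZMod N,
        (Measure.pi fun _ => bernoulliBool p) (good (offs v.1 v.2.1 v.2.2))ᶜ ≤
          ENNReal.ofReal ((K * (N:ℝ) ^ (-δ)) ^ m) := by
      intro v
      refine (good_bound p q r hple hq1 hr1 hr0 m hq hr (offs v.1 v.2.1 v.2.2) (N:ℝ)
        (by rw [ZMod.card])).trans ?_
      rw [ENNReal.ofReal_pow (by positivity)]
      exact pow_le_pow_left' (ENNReal.ofReal_le_ofReal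
        (num_bound ε N r M δ hn hr0' hM0 hδ0.le hδ1 hδ2 hpr)) m
    refine (Finset.sum_le_sum fun v _ => hb v).trans ?_
    rw [Finset.sum_const, Finset.card_univ, nsmul_eq_mul, ← ENNReal.ofReal_natCast,
      ← ENNReal.ofReal_mul (by positivity)]
    apply ENNReal.ofReal_le_ofReal
    apply le_of_eq
    simp only [Fintype.card_prod, ZMod.card]
    rw [neg_sub, show 3 - δ * m = (3:ℝ) + (-δ) * m by ring, Real.rpow_add hn0,
      Real.rpow_mul_natCast hn0.le]
    norm_cast
    push_cast
    ring
  have hlim : Tendsto (fun N : ℕ => 1 - ENNReal.ofReal (K ^ m * (N : ℝ) ^ (-(δ * m - 3))))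
      atTop (nhds 1) := by
    have h1 : Tendsto (fun N : ℕ => (N : ℝ) ^ (-(δ * m - 3))) atTop (nhds 0) :=
      (tendsto_rpow_neg_atTop (by linarith)).comp tendsto_natCast_atTop_atTop
    have h2 := ENNReal.tendsto_ofReal (h1.const_mul (K ^ m))
    rw [mul_zero, ENNReal.ofReal_zero] at h2
    have h3 := ENNReal.Tendsto.sub (tendsto_const_nhds (x := (1 : ENNReal)) (f := atTop)) h2
      (Or.inl (by simp))
    simpa using h3
  refine tendsto_of_tendsto_of_tendsto_of_le_of_le' hlim tendsto_const_nhds ?_ ?_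
  · filter_upwards [eventually_ge_atTop 1] with N hN using (main N hN).1
  · filter_upwards [eventually_ge_atTop 1] with N hN using (main N hN).2
end

section
/- Let ε be a real number with 0 < ε < 1/2, and for each N let p = p(N) = N^{-1/2+ε}. Then there exists a natural number i = i(ε), depending only on ε, such that if A is a random subset of ZMod N with parameter p, then with high probability (as N → ∞), Λ^i_{a,b,c}(A) > 0 simultaneously for all pairwise distinct a, b, c ∈ ZMod N. -/
open MeasureTheory Filter

section Sprinkling

set_option linter.unusedSectionVars false

variable {α : Type*} [DecidableEq α]

/-- Expectation of `f A` for `A` a `p`-random subset of the finite set `s`. -/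
noncomputable def Ex (s : Finset α) (p : ℝ) (f : Finset α → ℝ) : ℝ :=
  ∑ A ∈ s.powerset, p ^ A.card * (1 - p) ^ (s.card - A.card) * f A

open Classical in
/-- Probability of an event for a `p`-random subset of `s`. -/
noncomputable def Pr (s : Finset α) (p : ℝ) (Q : Finset α → Prop) : ℝ :=
  Ex s p (fun A => if Q A then 1 else 0)

lemma Ex_insert {s : Finset α} {x : α} (hx : x ∉ s) (p : ℝ) (f : Finset α → ℝ) :
    Ex (insert x s) p f = (1 - p) * Ex s p f + p * Ex s p (fun A => f (insert x A)) := by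
  unfold Ex
  rw [Finset.sum_powerset_insert hx, Finset.mul_sum, Finset.mul_sum]
  congr 1
  · apply Finset.sum_congr rfl
    intro A hA
    have hAs := Finset.card_le_card (Finset.mem_powerset.1 hA)
    rw [Finset.card_insert_of_notMem hx, Nat.succ_sub hAs, pow_succ]
    ring
  · apply Finset.sum_congr rfl
    intro A hA
    have hxA : x ∉ A := fun h => hx (Finset.mem_powerset.1 hA h)
    rw [Finset.card_insert_of_notMem hx, Finset.card_insert_of_notMem hxA,
      Nat.succ_sub_succ, pow_succ]
    ring

lemma Ex_mono {s : Finset α} {p : ℝ} (h0 : 0 ≤ p) (h1 : p ≤ 1) {f g : Finset α → ℝ}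
    (h : ∀ A, f A ≤ g A) : Ex s p f ≤ Ex s p g := by
  unfold Ex
  apply Finset.sum_le_sum
  intro A _
  have : 0 ≤ 1 - p := by linarith
  exact mul_le_mul_of_nonneg_left (h A) (by positivity)

lemma Ex_add (s : Finset α) (p : ℝ) (f g : Finset α → ℝ) :
    Ex s p (fun A => f A + g A) = Ex s p f + Ex s p g := by
  unfold Ex
  rw [← Finset.sum_add_distrib]
  exact Finset.sum_congr rfl fun _ _ => by ring

lemma Ex_mul (s : Finset α) (p c : ℝ) (f : Finset α → ℝ) :
    Ex s p (fun A => c * f A) = c * Ex s p f := by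
  unfold Ex
  rw [Finset.mul_sum]
  exact Finset.sum_congr rfl fun _ _ => by ring

lemma Ex_sum {ι : Type*} (t : Finset ι) (s : Finset α) (p : ℝ) (f : ι → Finset α → ℝ) :
    Ex s p (fun A => ∑ i ∈ t, f i A) = ∑ i ∈ t, Ex s p (f i) := by
  unfold Ex
  rw [Finset.sum_comm]
  exact Finset.sum_congr rfl fun _ _ => by rw [Finset.mul_sum]

lemma Ex_subset (s : Finset α) (p : ℝ) : ∀ T ⊆ s,
    Ex s p (fun A => if T ⊆ A then 1 else 0) = p ^ T.card := by
  induction s using Finset.induction_on with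
  | empty =>
    intro T hT
    have : T = ∅ := Finset.subset_empty.1 hT
    subst this
    simp [Ex]
  | insert x s hx ih =>
    intro T hT
    rw [Ex_insert hx]
    by_cases hxT : x ∈ T
    · have e1 : Ex s p (fun A => if T ⊆ A then (1:ℝ) else 0) = 0 := by
        unfold Ex
        apply Finset.sum_eq_zero
        intro A hA
        have hn : ¬ T ⊆ A := fun h => hx (Finset.mem_powerset.1 hA (h hxT))
        simp [hn]
      have e2 : (fun A => if T ⊆ insert x A then (1:ℝ) else 0)
          = fun A => if T.erase x ⊆ A then 1 else 0 := by
        funext A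
        simp only [Finset.subset_insert_iff]
      rw [e1, e2, ih (T.erase x) (Finset.subset_insert_iff.1 hT), Finset.card_erase_of_mem hxT]
      have : 0 < T.card := Finset.card_pos.2 ⟨x, hxT⟩
      obtain ⟨n, hn⟩ : ∃ n, T.card = n + 1 := ⟨T.card - 1, by omega⟩
      rw [hn]
      simp [pow_succ]
      ring
    · have e2 : (fun A => if T ⊆ insert x A then (1:ℝ) else 0)
          = fun A => if T ⊆ A then 1 else 0 := by
        funext A
        simp only [Finset.subset_insert_iff_of_notMem hxT]
      rw [e2, ih T ((Finset.subset_insert_iff_of_notMem hxT).1 hT)]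
      ring

lemma Ex_one (s : Finset α) (p : ℝ) : Ex s p (fun _ => 1) = 1 := by
  simpa using Ex_subset s p ∅ (by simp)

lemma Ex_const (s : Finset α) (p c : ℝ) : Ex s p (fun _ => c) = c := by
  have := Ex_mul s p c (fun _ => 1)
  rw [Ex_one] at this
  simpa using this

lemma Ex_sprinkle (s : Finset α) {p q r : ℝ} (hq : 0 ≤ q) (hr : 0 ≤ r) (hqr : q + r ≤ p)
    (hp : p ≤ 1) : ∀ f : Finset α → ℝ, (∀ A B, A ⊆ B → f B ≤ f A) →
    Ex s p f ≤ Ex s q (fun A => Ex s r (fun B => f (A ∪ B))) := by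
  induction s using Finset.induction_on with
  | empty => intro f _; simp [Ex]
  | insert x s hx ih =>
    intro f hf
    have h1 := ih f hf
    have h2 := ih (fun A => f (insert x A))
      (fun A B h => hf _ _ (Finset.insert_subset_insert _ h))
    have h3 : Ex s p (fun A => f (insert x A)) ≤ Ex s p f :=
      Ex_mono (by linarith) hp fun A => hf _ _ (Finset.subset_insert _ _)
    simp only [Ex_insert hx]
    rw [Ex_add, Ex_add, Ex_mul, Ex_mul, Ex_mul, Ex_mul]
    simp only [Finset.insert_union, Finset.union_insert, Finset.insert_idem]
    set a := Ex s p f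
    set b := Ex s p (fun A => f (insert x A))
    set c := Ex s q (fun A => Ex s r (fun B => f (A ∪ B)))
    set d := Ex s q (fun A => Ex s r (fun B => f (insert x (A ∪ B))))
    have k1 : 0 ≤ (1 - q) * (1 - r) := mul_nonneg (by linarith) (by linarith)
    have k2 : 0 ≤ q + r - q * r := by nlinarith
    have k3 : 0 ≤ p - (q + r - q * r) := by nlinarith
    have m1 := mul_le_mul_of_nonneg_left h1 k1
    have m2 := mul_le_mul_of_nonneg_left h2 k2
    have m3 := mul_nonneg k3 (sub_nonneg.2 h3)
    nlinarith

lemma Pr_mono {s : Finset α} {p : ℝ} (h0 : 0 ≤ p) (h1 : p ≤ 1) {P Q : Finset α → Prop}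
    (h : ∀ A, P A → Q A) : Pr s p P ≤ Pr s p Q := by
  unfold Pr
  apply Ex_mono h0 h1
  intro A
  by_cases hP : P A
  · simp [hP, h A hP]
  · simp only [hP, if_false]; split_ifs <;> norm_num

lemma Pr_nonneg {s : Finset α} {p : ℝ} (h0 : 0 ≤ p) (h1 : p ≤ 1) (P : Finset α → Prop) :
    0 ≤ Pr s p P := by
  rw [← Ex_const s p 0]
  unfold Pr
  apply Ex_mono h0 h1
  intro A
  split_ifs <;> norm_num

lemma Pr_or {s : Finset α} {p : ℝ} (h0 : 0 ≤ p) (h1 : p ≤ 1) (P Q : Finset α → Prop) :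
    Pr s p (fun A => P A ∨ Q A) ≤ Pr s p P + Pr s p Q := by
  unfold Pr
  rw [← Ex_add]
  apply Ex_mono h0 h1
  intro A
  by_cases hP : P A <;> by_cases hQ : Q A <;> simp [hP, hQ]

lemma Pr_exists {ι : Type*} (t : Finset ι) {s : Finset α} {p : ℝ} (h0 : 0 ≤ p) (h1 : p ≤ 1)
    (P : ι → Finset α → Prop) :
    Pr s p (fun A => ∃ i ∈ t, P i A) ≤ ∑ i ∈ t, Pr s p (P i) := by
  classical
  unfold Pr
  rw [← Ex_sum]
  apply Ex_mono h0 h1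
  intro A
  have hn : ∀ i ∈ t, (0:ℝ) ≤ if P i A then 1 else 0 := by
    intro i _; split_ifs <;> norm_num
  split_ifs with h
  · obtain ⟨i, hi, hP⟩ := h
    have := Finset.single_le_sum hn hi
    simpa [hP] using this
  · exact Finset.sum_nonneg hn

lemma Pr_markov {s : Finset α} {p : ℝ} (h0 : 0 ≤ p) (h1 : p ≤ 1) {f : Finset α → ℝ}
    (hf : ∀ A, 0 ≤ f A) {t : ℝ} (ht : 0 < t) :
    Pr s p (fun A => t ≤ f A) ≤ Ex s p f / t := by
  rw [div_eq_inv_mul, ← Ex_mul]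
  unfold Pr
  apply Ex_mono h0 h1
  intro A
  have := hf A
  split_ifs with h
  · rw [← div_eq_inv_mul, le_div_iff₀ ht]; simpa using h
  · positivity

/-- two-stage exposure -/
lemma Pr_two_stage {s : Finset α} {p q r : ℝ} (hq : 0 ≤ q) (hr : 0 ≤ r) (hqr : q + r ≤ p)
    (hp : p ≤ 1) {Q : Finset α → Prop} (hQ : ∀ A B, A ⊆ B → Q A → Q B)
    (G : Finset α → Prop) {δ₁ δ₂ : ℝ} (hG : Pr s q (fun A => ¬ G A) ≤ δ₁) (hδ₂ : 0 ≤ δ₂)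
    (h : ∀ A, G A → Pr s r (fun B => ¬ Q (A ∪ B)) ≤ δ₂) :
    Pr s p (fun A => ¬ Q A) ≤ δ₁ + δ₂ := by
  classical
  have h1 : Pr s p (fun A => ¬ Q A) ≤ Ex s q (fun A => Pr s r (fun B => ¬ Q (A ∪ B))) := by
    unfold Pr
    apply Ex_sprinkle s hq hr hqr hp
    intro A B hAB
    by_cases hA : Q A
    · simp [hA, hQ A B hAB hA]
    · simp only [hA, not_false_eq_true, if_true]; split_ifs <;> norm_num
  refine h1.trans ?_
  have h2 : Ex s q (fun A => Pr s r (fun B => ¬ Q (A ∪ B)))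
      ≤ Ex s q (fun A => (if ¬ G A then 1 else 0) + δ₂) := by
    apply Ex_mono hq (by linarith)
    intro A
    by_cases hA : G A
    · simpa [hA] using h A hA
    · have : Pr s r (fun B => ¬ Q (A ∪ B)) ≤ 1 := by
        rw [← Ex_one s r]
        unfold Pr
        apply Ex_mono hr (by linarith)
        intro B
        split_ifs <;> norm_num
      simp only [hA, not_false_eq_true, if_true]
      linarith
  refine h2.trans ?_
  rw [Ex_add, Ex_const]
  have : Ex s q (fun A => if ¬ G A then 1 else 0) = Pr s q (fun A => ¬ G A) := by
    unfold Pr; congr!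
  rw [this]
  linarith

lemma Pr_amplify {s : Finset α} {q δ : ℝ} (hq : 0 ≤ q) {Q : Finset α → Prop}
    (hQ : ∀ A B, A ⊆ B → Q A → Q B) (hδ : 0 ≤ δ) (h : Pr s q (fun A => ¬ Q A) ≤ δ) (m : ℕ) :
    ∀ p : ℝ, m * q ≤ p → p ≤ 1 → Pr s p (fun A => ¬ Q A) ≤ δ ^ m := by
  classical
  induction m with
  | zero =>
    intro p hp hp1
    simp only [Nat.cast_zero, zero_mul] at hp
    rw [pow_zero, ← Ex_one s p]
    unfold Pr
    apply Ex_mono hp hp1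
    intro B
    split_ifs <;> norm_num
  | succ m ih =>
    intro p hp hp1
    push_cast at hp
    have hmq : 0 ≤ m * q := by positivity
    have i1 := ih (p - q) (by linarith) (by linarith)
    have h1 : Pr s p (fun A => ¬ Q A)
        ≤ Ex s q (fun A => Ex s (p - q) (fun B => if ¬ Q (A ∪ B) then 1 else 0)) := by
      unfold Pr
      have := Ex_sprinkle s (p := p) hq (r := p - q) (by linarith) (by linarith) hp1
        (fun A => if ¬ Q A then 1 else 0) ?_
      · convert this
      intro A B hAB
      by_cases hA : Q A
      · simp [hA, hQ A B hAB hA]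
      · simp only [hA, not_false_eq_true, if_true]; split_ifs <;> norm_num
    have h2 : Ex s q (fun A => Ex s (p - q) (fun B => if ¬ Q (A ∪ B) then 1 else 0))
        ≤ Ex s q (fun A => Pr s (p - q) (fun B => ¬ Q B) * (if ¬ Q A then 1 else 0)) := by
      apply Ex_mono hq (by linarith)
      intro A
      unfold Pr
      rw [mul_comm, ← Ex_mul]
      apply Ex_mono (by linarith) (by linarith)
      intro B
      by_cases hA : Q A
      · simp [hA, hQ A _ Finset.subset_union_left hA]
      by_cases hB : Q B
      · simp [hB, hQ B _ Finset.subset_union_right hB]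
      simp only [hA, hB, not_false_eq_true, if_true]
      split_ifs <;> norm_num
    rw [Ex_mul] at h2
    have h3 : Ex s q (fun A => if ¬ Q A then 1 else 0) = Pr s q (fun A => ¬ Q A) := by
      unfold Pr; congr!
    rw [h3] at h2
    have h4 := Pr_nonneg (s := s) hq (by linarith : q ≤ 1) (fun A => ¬ Q A)
    calc _ ≤ _ := h1
      _ ≤ _ := h2
      _ ≤ δ ^ m * δ := mul_le_mul i1 h h4 (by positivity)
      _ = _ := (pow_succ _ _).symm

/-- Chebyshev for the binomial lower tail -/
lemma Pr_bin {s : Finset α} {q : ℝ} (hq : 0 < q) (hq1 : q ≤ 1) (D : Finset α) (hD : D ⊆ s) :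
    Pr s q (fun A => ((A ∩ D).card : ℝ) < q * D.card / 2) ≤ 4 / (q * D.card) := by
  classical
  rcases D.eq_empty_or_nonempty with rfl | hne
  · have : Pr s q (fun A => ((A ∩ ∅).card : ℝ) < q * (∅ : Finset α).card / 2) = 0 := by
      simp [Pr, Ex_const]
    rw [this]; simp
  have hd : (0:ℝ) < D.card := by exact_mod_cast hne.card_pos
  set μ := q * (D.card : ℝ) with hμ
  have hμ0 : 0 < μ := by positivity
  have hX : ∀ A : Finset α, ((A ∩ D).card : ℝ) = ∑ x ∈ D, if ({x} : Finset α) ⊆ A then 1 else 0 := by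
    intro A
    simp [Finset.inter_comm A D, Finset.sum_ite_mem]
  have hX2 : ∀ A : Finset α, ((A ∩ D).card : ℝ) ^ 2
      = ∑ x ∈ D, ∑ y ∈ D, if ({x, y} : Finset α) ⊆ A then 1 else 0 := by
    intro A
    rw [hX, sq, Finset.sum_mul_sum]
    refine Finset.sum_congr rfl fun x _ => Finset.sum_congr rfl fun y _ => ?_
    by_cases hx : x ∈ A <;> by_cases hy : y ∈ A <;> simp [hx, hy, Finset.insert_subset_iff]
  have e1 : Ex s q (fun A => ((A ∩ D).card : ℝ)) = μ := by
    simp only [hX]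
    rw [Ex_sum, Finset.sum_congr rfl (fun x hx => Ex_subset s q {x} (by simpa using hD hx))]
    simp [hμ, mul_comm]
  have e2 : Ex s q (fun A => ((A ∩ D).card : ℝ) ^ 2) ≤ μ + μ ^ 2 := by
    simp only [hX2]
    rw [Ex_sum]
    have : ∀ x ∈ D, Ex s q (fun A => ∑ y ∈ D, if ({x, y} : Finset α) ⊆ A then (1:ℝ) else 0)
        ≤ q + D.card * q ^ 2 := by
      intro x hx
      rw [Ex_sum, Finset.sum_congr rfl (fun y hy => Ex_subset s q {x, y} (by
        rw [Finset.insert_subset_iff, Finset.singleton_subset_iff]; exact ⟨hD hx, hD hy⟩))]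
      calc ∑ y ∈ D, q ^ (({x, y} : Finset α).card)
          ≤ ∑ y ∈ D, ((if x = y then q else 0) + q ^ 2) := by
            apply Finset.sum_le_sum
            intro y _
            by_cases hxy : x = y
            · subst hxy; simp; positivity
            · simp [hxy, Finset.card_pair hxy]
        _ = q + D.card * q ^ 2 := by
            rw [Finset.sum_add_distrib]; simp [hx]
    refine (Finset.sum_le_sum this).trans ?_
    rw [Finset.sum_const, nsmul_eq_mul, hμ]
    apply le_of_eq; ring
  have e3 : Ex s q (fun A => (((A ∩ D).card : ℝ) - μ) ^ 2) ≤ μ := by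
    have : (fun A : Finset α => (((A ∩ D).card : ℝ) - μ) ^ 2)
        = fun A => (((A ∩ D).card : ℝ) ^ 2 + ((-2 * μ) * ((A ∩ D).card : ℝ) + μ ^ 2)) := by
      funext A; ring
    rw [this, Ex_add, Ex_add, Ex_mul, Ex_const, e1]
    nlinarith
  have h1 : Pr s q (fun A => ((A ∩ D).card : ℝ) < μ / 2)
      ≤ Pr s q (fun A => μ ^ 2 / 4 ≤ (((A ∩ D).card : ℝ) - μ) ^ 2) := by
    apply Pr_mono hq.le hq1
    intro A hA
    nlinarith
  refine h1.trans ((Pr_markov hq.le hq1 (fun A => sq_nonneg _) (by positivity)).trans ?_)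
  rw [div_le_div_iff₀ (by positivity) hμ0]
  nlinarith

end Sprinkling
section Growth

set_option linter.unusedSectionVars false

variable {G : Type*} [AddCommGroup G] [Fintype G] [DecidableEq G]

/-- For a random set `A`, the difference set `A - Y` is typically large. -/
lemma Pr_expand {q : ℝ} (hq : 0 < q) (hq1 : q ≤ 1) (Y : Finset G) (hY : 0 < Y.card) :
    Pr (Finset.univ : Finset G) q (fun A =>
      ((Finset.univ.filter fun w => ∃ y ∈ Y, w + y ∈ A).card : ℝ)
        < Fintype.card G * q * Y.card / 4)
      ≤ 4 / (q * Fintype.card G) + 4 * q * Y.card := by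
  classical
  have hN : (0:ℝ) < Fintype.card G := by exact_mod_cast Fintype.card_pos
  have hY' : (0:ℝ) < Y.card := by exact_mod_cast hY
  set N : ℝ := ((Fintype.card G : ℕ) : ℝ) with hNdef
  let C : Finset G → ℝ := fun A => ∑ w : G, ∑ y ∈ Y, ∑ y' ∈ Y.erase y,
    if ({w + y, w + y'} : Finset G) ⊆ A then 1 else 0
  have hC0 : ∀ A, 0 ≤ C A := by
    intro A
    refine Finset.sum_nonneg fun w _ => Finset.sum_nonneg fun y _ => Finset.sum_nonneg fun y' _ => ?_
    split_ifs <;> norm_num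
  have hEC : Ex Finset.univ q C ≤ N * (Y.card * (Y.card * q ^ 2)) := by
    simp only [C]
    rw [Ex_sum]
    have : ∀ w ∈ (Finset.univ : Finset G), Ex Finset.univ q (fun A => ∑ y ∈ Y, ∑ y' ∈ Y.erase y,
        if ({w + y, w + y'} : Finset G) ⊆ A then (1:ℝ) else 0) ≤ Y.card * (Y.card * q ^ 2) := by
      intro w _
      rw [Ex_sum]
      have : ∀ y ∈ Y, Ex Finset.univ q (fun A => ∑ y' ∈ Y.erase y,
          if ({w + y, w + y'} : Finset G) ⊆ A then (1:ℝ) else 0) ≤ Y.card * q ^ 2 := by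
        intro y _
        rw [Ex_sum]
        have : ∀ y' ∈ Y.erase y, Ex Finset.univ q (fun A =>
            if ({w + y, w + y'} : Finset G) ⊆ A then (1:ℝ) else 0) = q ^ 2 := by
          intro y' hy'
          rw [Ex_subset _ _ _ (Finset.subset_univ _), Finset.card_pair]
          intro h
          exact (Finset.ne_of_mem_erase hy') (add_left_cancel h).symm
        rw [Finset.sum_congr rfl this, Finset.sum_const, nsmul_eq_mul]
        gcongr
        exact Finset.erase_subset _ _
      refine (Finset.sum_le_sum this).trans ?_
      rw [Finset.sum_const, nsmul_eq_mul]
    refine (Finset.sum_le_sum this).trans ?_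
    rw [Finset.sum_const, nsmul_eq_mul, Finset.card_univ]
  have key : ∀ A : Finset G, (A.card : ℝ) * Y.card - C A
      ≤ ((Finset.univ.filter fun w => ∃ y ∈ Y, w + y ∈ A).card : ℝ) := by
    intro A
    have h1 : (A.card : ℝ) * Y.card = ∑ w : G, ∑ y ∈ Y, if w + y ∈ A then (1:ℝ) else 0 := by
      rw [Finset.sum_comm]
      have : ∀ y ∈ Y, (∑ w : G, if w + y ∈ A then (1:ℝ) else 0) = A.card := by
        intro y _
        refine (Equiv.sum_comp (Equiv.addRight y) (fun w => if w ∈ A then (1:ℝ) else 0)).trans ?_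
        simp
      rw [Finset.sum_congr rfl this, Finset.sum_const, nsmul_eq_mul, mul_comm]
    rw [h1, Finset.card_filter]
    push_cast
    simp only [C]
    rw [← Finset.sum_sub_distrib]
    apply Finset.sum_le_sum
    intro w _
    set r := ∑ y ∈ Y, if w + y ∈ A then (1:ℝ) else 0 with hr
    have h2 : (∑ y ∈ Y, ∑ y' ∈ Y.erase y,
        if ({w + y, w + y'} : Finset G) ⊆ A then (1:ℝ) else 0) = r ^ 2 - r := by
      have : ∀ y ∈ Y, (∑ y' ∈ Y.erase y,
          if ({w + y, w + y'} : Finset G) ⊆ A then (1:ℝ) else 0)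
          = (if w + y ∈ A then (1:ℝ) else 0) * r - (if w + y ∈ A then (1:ℝ) else 0) := by
        intro y hy
        have e : ∀ y', (if ({w + y, w + y'} : Finset G) ⊆ A then (1:ℝ) else 0)
            = (if w + y ∈ A then (1:ℝ) else 0) * (if w + y' ∈ A then (1:ℝ) else 0) := by
          intro y'
          by_cases hx : w + y ∈ A <;> by_cases hy : w + y' ∈ A <;>
            simp [hx, hy, Finset.insert_subset_iff]
        simp only [e]
        rw [← Finset.mul_sum, ← Finset.sum_erase_add Y _ hy] at *
        by_cases hx : w + y ∈ A
        · simp only [hx, if_true] at *; rw [hr]; ring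
        · simp [hx]
      rw [Finset.sum_congr rfl this, Finset.sum_sub_distrib, ← Finset.sum_mul, ← hr, sq]
    rw [h2]
    split_ifs with h
    · nlinarith [sq_nonneg (r - 1)]
    · have : r = 0 := by
        rw [hr]
        apply Finset.sum_eq_zero
        intro y hy
        rw [if_neg]
        intro h'
        exact h ⟨y, hy, h'⟩
      rw [this]; norm_num
  have hbin := Pr_bin hq hq1 (Finset.univ : Finset G) (Finset.subset_univ _)
  have hmk := Pr_markov (s := (Finset.univ : Finset G)) hq.le hq1 hC0
    (t := N * q * Y.card / 4) (by positivity)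
  refine (Pr_mono hq.le hq1 (Q := fun A => ((A ∩ Finset.univ).card : ℝ)
    < q * (Finset.univ : Finset G).card / 2 ∨ N * q * Y.card / 4 ≤ C A) ?_).trans ?_
  · intro A hA
    by_contra hcon
    push Not at hcon
    obtain ⟨c1, c2⟩ := hcon
    rw [Finset.inter_univ, Finset.card_univ, ← hNdef] at c1
    have := key A
    have : q * N / 2 * Y.card ≤ A.card * Y.card := by gcongr
    linarith
  · refine (Pr_or hq.le hq1 _ _).trans (add_le_add ?_ ?_)
    · simpa [Finset.card_univ, hNdef] using hbin
    · refine hmk.trans ?_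
      rw [div_le_iff₀ (by positivity)]
      refine hEC.trans (le_of_eq ?_)
      ring

/-- One growth step. -/
lemma Pr_step {q r p M δ : ℝ} (hq : 0 < q) (hr : 0 ≤ r) (hp : p ≤ 1) (hqr : 2 * q + r ≤ p)
    (hM : 8 ≤ M) (hNq : M ≤ Fintype.card G * q) (hNq2 : Fintype.card G * q ^ 2 = M ^ 4)
    (Y : Finset G) (hY : 0 < Y.card) (hqY : q * Y.card ≤ 2 / M) (d : G)
    {Q : Finset G → Prop} (hQ : ∀ A B, A ⊆ B → Q A → Q B) (B : Finset G) (hδ : 0 ≤ δ)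
    (h : ∀ B', B ⊆ B' → ∀ S : Finset G,
      (∀ w ∈ S, w + d ∈ B' ∧ ∃ y ∈ Y, w + y ∈ B') → M ^ 3 * Y.card ≤ S.card →
      Pr (Finset.univ : Finset G) r (fun A => ¬ Q (B' ∪ A)) ≤ δ) :
    Pr (Finset.univ : Finset G) p (fun A => ¬ Q (B ∪ A)) ≤ 28 / M + δ := by
  classical
  have hY' : (1:ℝ) ≤ Y.card := by exact_mod_cast hY
  have hM0 : 0 < M := by linarith
  have hq1 : q ≤ 1 := by linarith
  set N : ℝ := ((Fintype.card G : ℕ) : ℝ) with hNdef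
  have hN : 0 < N := by rw [hNdef]; exact_mod_cast Fintype.card_pos
  have hQB : ∀ B : Finset G, ∀ A A', A ⊆ A' → Q (B ∪ A) → Q (B ∪ A') :=
    fun B A A' hA => hQ _ _ (Finset.union_subset_union_right hA)
  have e : (28 / M + δ) = 12 / M + (16 / M + δ) := by ring
  rw [e]
  refine Pr_two_stage (q := q) (r := q + r) hq.le (by linarith) (by linarith) hp (hQB B)
    (fun A => N * q * Y.card / 4 ≤
      ((Finset.univ.filter fun w => ∃ y ∈ Y, w + y ∈ A).card : ℝ)) ?_ (by positivity) ?_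
  · have := Pr_expand hq hq1 Y hY
    simp only [not_le]
    refine this.trans ?_
    have h1 : 4 / (q * N) ≤ 4 / M := by
      rw [mul_comm q N]; gcongr
    have h2 : 4 * q * Y.card ≤ 8 / M := by
      calc 4 * q * Y.card = 4 * (q * Y.card) := by ring
        _ ≤ 4 * (2 / M) := by gcongr
        _ = 8 / M := by ring
    calc _ ≤ 4 / M + 8 / M := add_le_add h1 h2
      _ = 12 / M := by ring
  intro A₁ hA₁
  set D := Finset.univ.filter fun w => ∃ y ∈ Y, w + y ∈ A₁ with hD
  set D' := D.map (Equiv.addRight d).toEmbedding with hD'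
  have hDc : D'.card = D.card := Finset.card_map _
  have hqD : M ^ 4 * Y.card / 4 ≤ q * D.card := by
    calc M ^ 4 * Y.card / 4 = q * (N * q * Y.card / 4) := by rw [← hNq2]; ring
      _ ≤ q * D.card := by gcongr
  have hqD0 : 0 < q * D.card := lt_of_lt_of_le (by positivity) hqD
  refine Pr_two_stage (q := q) (r := r) hq.le hr le_rfl (by linarith)
    (Q := fun A => Q (B ∪ (A₁ ∪ A))) ?_
    (fun A => q * D'.card / 2 ≤ ((A ∩ D').card : ℝ)) ?_ hδ ?_
  · intro A A' hA
    exact hQB _ _ _ (Finset.union_subset_union_right hA)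
  · have := Pr_bin (s := Finset.univ) hq hq1 D' (Finset.subset_univ _)
    simp only [not_le]
    refine this.trans ?_
    rw [hDc, div_le_div_iff₀ hqD0 hM0]
    have : M ^ 4 * 1 ≤ M ^ 4 * Y.card := by gcongr
    have h3 : M ^ 1 ≤ M ^ 4 := pow_le_pow_right₀ (by linarith) (by norm_num)
    linarith
  · intro A₂ hA₂
    rw [hDc] at hA₂
    have := h (B ∪ (A₁ ∪ A₂)) Finset.subset_union_left
      ((A₂ ∩ D').map (Equiv.subRight d).toEmbedding) ?_ ?_
    · simpa [Finset.union_assoc] using this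
    · intro w hw
      simp only [Finset.mem_map, Finset.mem_inter, hD', hD, Finset.mem_filter, Finset.mem_univ,
        true_and, Equiv.coe_toEmbedding, Equiv.coe_addRight, Equiv.subRight_apply] at hw
      obtain ⟨x, ⟨hx, v, ⟨y, hy, hvy⟩, rfl⟩, rfl⟩ := hw
      simp only [add_sub_cancel_right]
      exact ⟨by simp [hx], y, hy, by simp [hvy]⟩
    · rw [Finset.card_map]
      refine le_trans ?_ hA₂
      have : M ^ 3 * Y.card * 8 ≤ M ^ 3 * Y.card * M := by gcongr
      nlinarith

/-- Points reachable in `n` steps. -/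
def Rch (A : Finset G) (d : ℕ → G) (b : G) : ℕ → G → Prop
  | 0 => fun w => w = b
  | n + 1 => fun w => w + d n ∈ A ∧ ∃ v, Rch A d b n v ∧ w + v ∈ A

lemma Rch_mono {A B : Finset G} (h : A ⊆ B) (d : ℕ → G) (b : G) (n : ℕ) :
    ∀ w, Rch A d b n w → Rch B d b n w := by
  induction n with
  | zero => intro w hw; exact hw
  | succ n ih =>
    rintro w ⟨h1, v, h2, h3⟩
    exact ⟨h h1, v, ih v h2, h h3⟩

/-- alternate between `c` and `x` -/
def alt (c x : G) (n : ℕ) : G := if n % 2 = 0 then c else x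

/-- The combinatorial structure we look for. -/
def Good (K : ℕ) (a b c : G) (A : Finset G) : Prop :=
  ∃ x, b + x ∈ A ∧ a + x ∈ A ∧ ∃ v, Rch A (alt c x) b K v ∧ a + v ∈ A

lemma Good_mono (K : ℕ) (a b c : G) (A B : Finset G) (h : A ⊆ B) (hA : Good K a b c A) :
    Good K a b c B := by
  obtain ⟨x, h1, h2, v, h3, h4⟩ := hA
  exact ⟨x, h h1, h h2, v, Rch_mono h _ _ _ _ h3, h h4⟩

lemma Pr_chain {q M : ℝ} {K : ℕ} (hq : 0 < q)
    (hM : 8 ≤ M) (hNq : M ≤ Fintype.card G * q) (hNq2 : Fintype.card G * q ^ 2 = M ^ 4)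
    (hqM : q * M ^ (3 * K) = M ^ 2) (a b c x : G) (i : ℕ) :
    ∀ j, j + i = K → ∀ p : ℝ, (2 * i + 1) * q ≤ p → p ≤ 1 → ∀ B S : Finset G,
      b + x ∈ B → a + x ∈ B → (∀ w ∈ S, Rch B (alt c x) b j w) → M ^ (3 * j) ≤ S.card →
      Pr (Finset.univ : Finset G) p (fun A => ¬ Good K a b c (B ∪ A)) ≤ (28 * i + 4) / M := by
  classical
  have hM0 : 0 < M := by linarith
  induction i with
  | zero =>
    intro j hj p hqp hp B S hb ha hS hSc
    have hj' : j = K := by omega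
    subst hj'
    simp only [Nat.cast_zero, mul_zero, zero_add, one_mul] at hqp ⊢
    have hqS : M ^ 2 ≤ q * S.card := by rw [← hqM]; gcongr
    have hS0 : (0:ℝ) < S.card := lt_of_lt_of_le (by positivity) hSc
    have hp0 : 0 < p := by linarith
    set D := S.map (Equiv.addLeft a).toEmbedding with hD
    have hDc : D.card = S.card := Finset.card_map _
    refine (Pr_mono hp0.le hp ?_).trans
      ((Pr_bin (s := Finset.univ) hp0 hp D (Finset.subset_univ _)).trans ?_)
    · intro A hA
      have : A ∩ D = ∅ := by
        by_contra hne
        obtain ⟨u, hu⟩ := Finset.nonempty_iff_ne_empty.2 hne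
        simp only [hD, Finset.mem_inter, Finset.mem_map, Equiv.coe_toEmbedding,
          Equiv.coe_addLeft] at hu
        obtain ⟨hu, v, hv, rfl⟩ := hu
        exact hA ⟨x, Finset.mem_union_left _ hb, Finset.mem_union_left _ ha, v,
          Rch_mono Finset.subset_union_left _ _ _ _ (hS v hv), Finset.mem_union_right _ hu⟩
      rw [this, hDc]
      simp only [Finset.card_empty, Nat.cast_zero]
      positivity
    · rw [hDc]
      gcongr
      calc M ≤ M ^ 2 := by nlinarith
        _ ≤ q * S.card := hqS
        _ ≤ p * S.card := by gcongr
  | succ i ih =>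
    intro j hj p hqp hp B S hb ha hS hSc
    push_cast at hqp
    have hMj : 1 ≤ M ^ (3 * j) := one_le_pow₀ (by linarith)
    obtain ⟨Y, hYS, hYc⟩ := Finset.exists_subset_card_eq
      (show ⌈M ^ (3 * j)⌉₊ ≤ S.card from Nat.ceil_le.2 hSc)
    have hY1 : M ^ (3 * j) ≤ Y.card := by rw [hYc]; exact Nat.le_ceil _
    have hY2 : (Y.card : ℝ) ≤ 2 * M ^ (3 * j) := by
      rw [hYc]
      have := Nat.ceil_lt_add_one (show 0 ≤ M ^ (3 * j) by positivity)
      linarith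
    have hY0 : 0 < Y.card := by
      have : (0:ℝ) < Y.card := by linarith
      exact_mod_cast this
    have hqY : q * Y.card ≤ 2 / M := by
      rw [le_div_iff₀ hM0]
      have h1 : M ^ (3 * j) * M ^ 3 ≤ M ^ (3 * K) := by
        rw [← pow_add]
        exact pow_le_pow_right₀ (by linarith) (by omega)
      have h2 : q * (M ^ (3 * j) * M ^ 3) ≤ M ^ 2 := by rw [← hqM]; gcongr
      have h3 : q * M ^ (3 * j) * M ≤ 1 := by
        have : (q * M ^ (3 * j) * M) * M ^ 2 ≤ 1 * M ^ 2 := by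
          calc _ = q * (M ^ (3 * j) * M ^ 3) := by ring
            _ ≤ _ := by linarith
        exact le_of_mul_le_mul_right this (by positivity)
      calc q * Y.card * M ≤ q * (2 * M ^ (3 * j)) * M := by gcongr
        _ = 2 * (q * M ^ (3 * j) * M) := by ring
        _ ≤ 2 := by linarith
    have := Pr_step (r := (2 * i + 1) * q) (p := p) (δ := (28 * i + 4) / M) hq (by positivity) hp
      (by linarith) hM hNq hNq2 Y hY0 hqY (alt c x j) (Good_mono K a b c) B (by positivity) ?_
    · refine this.trans (le_of_eq ?_)
      push_cast
      ring
    · intro B' hB' S' hS' hS'c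
      refine ih (j + 1) (by omega) _ le_rfl (by linarith) B' S' (hB' hb) (hB' ha) ?_ ?_
      · intro w hw
        obtain ⟨h1, y, hy, h2⟩ := hS' w hw
        exact ⟨h1, y, Rch_mono hB' _ _ _ _ (hS y (hYS hy)), h2⟩
      · refine le_trans ?_ hS'c
        calc M ^ (3 * (j + 1)) = M ^ 3 * M ^ (3 * j) := by ring
          _ ≤ _ := by gcongr

lemma Pr_Good {q M : ℝ} {K : ℕ} (hK : 1 ≤ K) (hq : 0 < q) (hqK : (2 * K + 3) * q ≤ 1)
    (hM : 8 ≤ M) (hNq : M ≤ Fintype.card G * q) (hNq2 : Fintype.card G * q ^ 2 = M ^ 4)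
    (hqM : q * M ^ (3 * K) = M ^ 2) (a b c : G) :
    Pr (Finset.univ : Finset G) ((2 * K + 3) * q) (fun A => ¬ Good K a b c A)
      ≤ (28 * K + 32) / M := by
  classical
  have hM0 : 0 < M := by linarith
  have hqY : q * ({b} : Finset G).card ≤ 2 / M := by
    rw [Finset.card_singleton, le_div_iff₀ hM0]
    have h1 : M ^ 3 ≤ M ^ (3 * K) := pow_le_pow_right₀ (by linarith) (by omega)
    have h2 : q * M ^ 3 ≤ M ^ 2 := by rw [← hqM]; gcongr
    have : (q * M) * M ^ 2 ≤ 1 * M ^ 2 := by nlinarith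
    have := le_of_mul_le_mul_right this (by positivity)
    push_cast
    linarith
  have := Pr_step (r := (2 * K + 1) * q) (p := (2 * K + 3) * q) (δ := (28 * K + 4) / M) hq
    (by positivity) hqK (by linarith) hM hNq hNq2 {b} (by simp) hqY a (Good_mono K a b c) ∅
    (by positivity) ?_
  · simp only [Finset.empty_union] at this
    refine this.trans (le_of_eq ?_)
    ring
  · intro B' _ S hS hSc
    have hS0 : (0:ℝ) < S.card := lt_of_lt_of_le (by simp; positivity) hSc
    obtain ⟨x, hx⟩ := Finset.card_pos.1 (by exact_mod_cast hS0 : 0 < S.card)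
    obtain ⟨h1, y, hy, h2⟩ := hS x hx
    rw [Finset.mem_singleton] at hy
    subst hy
    refine Pr_chain hq hM hNq hNq2 hqM a y c x K 0 (by omega) _ le_rfl (by linarith) B' {y}
      (by rwa [add_comm]) (by rwa [add_comm]) ?_ (by simp)
    intro w hw
    exact Finset.mem_singleton.1 hw

end Growth
section LamFacts

lemma Lam_nonneg (N : ℕ) [NeZero N] {t : ZMod N → ℝ} (ht : ∀ x, 0 ≤ t x) (i : ℕ) :
    ∀ a b c, 0 ≤ Lam N i a b c t := by
  induction i with
  | zero =>
    intro a b c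
    exact finsum_nonneg fun x => mul_nonneg (mul_nonneg (ht _) (ht _)) (ht _)
  | succ i ih =>
    intro a b c
    exact finsum_nonneg fun x => mul_nonneg (mul_nonneg (ih _ _ _) (ih _ _ _)) (ih _ _ _)

lemma Lam_zero_pos (N : ℕ) [NeZero N] {t : ZMod N → ℝ} (ht : ∀ x, 0 ≤ t x) {a b c : ZMod N}
    (x : ZMod N) (h1 : 0 < t (x + a)) (h2 : 0 < t (x + b)) (h3 : 0 < t (x + c)) :
    0 < Lam N 0 a b c t := by
  change 0 < ∑ᶠ x : ZMod N, t (x + a) * t (x + b) * t (x + c)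
  rw [finsum_eq_sum_of_fintype]
  refine Finset.sum_pos' (fun x _ => mul_nonneg (mul_nonneg (ht _) (ht _)) (ht _))
    ⟨x, Finset.mem_univ _, by positivity⟩

lemma Lam_succ_pos (N : ℕ) [NeZero N] {t : ZMod N → ℝ} (ht : ∀ x, 0 ≤ t x) {a b c : ZMod N}
    {i : ℕ} (z : ZMod N) (h1 : 0 < Lam N i a b z t) (h2 : 0 < Lam N i a z c t)
    (h3 : 0 < Lam N i z b c t) :
    0 < Lam N (i + 1) a b c t := by
  change 0 < ∑ᶠ z : ZMod N, Lam N i a b z t * Lam N i a z c t * Lam N i z b c t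
  rw [finsum_eq_sum_of_fintype]
  refine Finset.sum_pos' (fun x _ => mul_nonneg (mul_nonneg (Lam_nonneg N ht _ _ _ _)
    (Lam_nonneg N ht _ _ _ _)) (Lam_nonneg N ht _ _ _ _)) ⟨z, Finset.mem_univ _, by positivity⟩

lemma Lam_pos_of_clique (N : ℕ) [NeZero N] {t : ZMod N → ℝ} (ht : ∀ x, 0 ≤ t x) (x : ZMod N)
    (i : ℕ) : ∀ u v w : ZMod N, 0 < t (x + u) → 0 < t (x + v) → 0 < t (x + w) →
      0 < Lam N i u v w t := by
  induction i with
  | zero => intro u v w hu hv hw; exact Lam_zero_pos N ht x hu hv hw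
  | succ i ih =>
    intro u v w hu hv hw
    exact Lam_succ_pos N ht u (ih _ _ _ hu hv hu) (ih _ _ _ hu hu hw) (ih _ _ _ hu hv hw)

lemma Lam_pos_of_Rch (N : ℕ) [NeZero N] {t : ZMod N → ℝ} (ht : ∀ x, 0 ≤ t x)
    (A : Finset (ZMod N)) (hA : ∀ x ∈ A, 0 < t x) (b c x : ZMod N) (hb : b + x ∈ A) (i : ℕ) :
    ∀ v, Rch A (alt c x) b (2 * i + 1) v → ∀ z, z + x ∈ A → z + v ∈ A → 0 < Lam N i z b c t := by
  induction i with
  | zero =>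
    rintro v ⟨h1, b', h2, h3⟩ z _ hzv
    have hb' : b' = b := h2
    subst hb'
    have h1' : v + c ∈ A := by simpa [alt] using h1
    exact Lam_zero_pos N ht v (hA _ (by rwa [add_comm])) (hA _ h3) (hA _ h1')
  | succ i ih =>
    rintro v ⟨h1, z', ⟨h2, v', h3, h4⟩, h5⟩ z hzx hzv
    have h1' : v + c ∈ A := by
      have : (2 * i + 1 + 1) % 2 = 0 := by omega
      simpa [alt, this] using h1
    have h2' : z' + x ∈ A := by
      have : (2 * i + 1) % 2 = 1 := by omega
      simpa [alt, this] using h2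
    refine Lam_succ_pos N ht z' ?_ ?_ (ih v' h3 z' h2' h4)
    · exact Lam_pos_of_clique N ht x i _ _ _ (hA _ (by rwa [add_comm])) (hA _ (by rwa [add_comm]))
        (hA _ (by rwa [add_comm]))
    · exact Lam_pos_of_clique N ht v i _ _ _ (hA _ (by rwa [add_comm])) (hA _ h5) (hA _ h1')

lemma Lam_pos_of_Good (N : ℕ) [NeZero N] {t : ZMod N → ℝ} (ht : ∀ x, 0 ≤ t x)
    (A : Finset (ZMod N)) (hA : ∀ x ∈ A, 0 < t x) (a b c : ZMod N) (i : ℕ)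
    (h : Good (2 * i + 1) a b c A) : 0 < Lam N i a b c t := by
  obtain ⟨x, h1, h2, v, h3, h4⟩ := h
  exact Lam_pos_of_Rch N ht A hA b c x h1 i v h3 a h2 h4

lemma measure_eq_Pr (N : ℕ) [NeZero N] (p : ℝ) (hp0 : 0 ≤ p) (hp : p ≤ 1)
    (Q : Finset (ZMod N) → Prop) :
    randomSubsetMeasure N p.toNNReal {ω | Q (Finset.univ.filter fun x => ω x = true)}
      = ENNReal.ofReal (Pr (Finset.univ : Finset (ZMod N)) p Q) := by
  classical
  have h1p : 0 ≤ 1 - p := by linarith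
  have hfin : IsFiniteMeasure (bernoulliBool p.toNNReal) := by
    refine ⟨?_⟩
    simp only [bernoulliBool, Measure.coe_add, Measure.coe_smul, Pi.add_apply, Pi.smul_apply,
      measure_univ, smul_eq_mul, mul_one]
    exact ENNReal.add_lt_top.2 ⟨ENNReal.coe_lt_top,
      lt_of_le_of_lt tsub_le_self ENNReal.one_lt_top⟩
  have hb : ∀ v : Bool, bernoulliBool p.toNNReal {v} = ENNReal.ofReal (if v = true then p else 1 - p) := by
    intro v
    have e : ((p.toNNReal : NNReal) : ENNReal) = ENNReal.ofReal p := rfl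
    cases v
    · simp [bernoulliBool, e, ENNReal.ofReal_sub _ hp0]
    · simp [bernoulliBool, e]
  have hs : ∀ ω : ZMod N → Bool, randomSubsetMeasure N p.toNNReal {ω}
      = ENNReal.ofReal (p ^ (Finset.univ.filter fun x => ω x = true).card *
        (1 - p) ^ ((Finset.univ : Finset (ZMod N)).card -
          (Finset.univ.filter fun x => ω x = true).card)) := by
    intro ω
    rw [randomSubsetMeasure, dif_neg (NeZero.ne N), Measure.pi_singleton]
    simp only [hb]
    rw [← ENNReal.ofReal_prod_of_nonneg (by intro i _; split_ifs <;> assumption),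
      Finset.prod_ite, Finset.prod_const, Finset.prod_const]
    congr 3
    rw [← Finset.card_filter_add_card_filter_not (s := Finset.univ) (fun x => ω x = true)]
    simp
  have hset : {ω : ZMod N → Bool | Q (Finset.univ.filter fun x => ω x = true)}
      = ((Finset.univ.filter fun ω : ZMod N → Bool =>
        Q (Finset.univ.filter fun x => ω x = true) : Finset (ZMod N → Bool)) : Set _) := by
    ext ω; simp
  rw [hset, ← sum_measure_singleton]
  simp only [hs]
  rw [← ENNReal.ofReal_sum_of_nonneg (fun _ _ => by positivity)]
  congr 1
  rw [Finset.sum_filter, Pr, Ex]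
  refine Finset.sum_bij' (fun ω _ => Finset.univ.filter fun x => ω x = true)
    (fun A _ => fun x => decide (x ∈ A)) ?_ ?_ ?_ ?_ ?_
  · intro ω _; simp
  · intro A _; simp
  · intro ω _; funext x; simp
  · intro A _; ext x; simp
  · intro ω _
    split_ifs <;> simp

lemma Pr_not {α : Type*} [DecidableEq α] (s : Finset α) (p : ℝ) (Q : Finset α → Prop) :
    Pr s p Q = 1 - Pr s p (fun A => ¬ Q A) := by
  classical
  have : Pr s p Q + Pr s p (fun A => ¬ Q A) = 1 := by
    unfold Pr
    rw [← Ex_add]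
    refine Eq.trans ?_ (Ex_one s p)
    congr 1
    funext A
    by_cases h : Q A <;> simp [h]
  linarith

end LamFacts

lemma main_bound (i : ℕ) (ε : ℝ) (hε : ε < 1 / 2) (N : ℕ) (hN : 0 < N)
    (hM : 8 ≤ (N : ℝ) ^ ((1:ℝ) / (6 * (2 * i + 1))))
    (hp : ((18 * (2 * i + 1) + 1) * (2 * (2 * i + 1) + 3) : ℝ)
      ≤ (N : ℝ) ^ (ε - 1 / (3 * (2 * i + 1)))) :
    ENNReal.ofReal (1 - (28 * (2 * i + 1) + 32 : ℝ) ^ (18 * (2 * i + 1) + 1)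
        * (N : ℝ) ^ (-((1:ℝ) / (6 * (2 * i + 1))))) ≤
      randomSubsetMeasure N (Real.toNNReal ((N : ℝ) ^ (-(1:ℝ)/2 + ε)))
            {ω | ∀ a b c : ZMod N, a ≠ b → a ≠ c → b ≠ c →
              0 < Lam N i a b c (Set.indicator {x : ZMod N | ω x = true} fun _ => (1 : ℝ))} := by
  classical
  have : NeZero N := ⟨hN.ne'⟩
  set K : ℕ := 2 * i + 1 with hK
  have hKr : (2 * (i:ℝ) + 1) = (K : ℝ) := by rw [hK]; push_cast; ring
  rw [hKr] at hM hp ⊢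
  have hK1 : (1:ℝ) ≤ K := by exact_mod_cast (by omega : 1 ≤ K)
  have hN0 : (0:ℝ) < N := by exact_mod_cast hN
  have hN1 : (1:ℝ) ≤ N := by exact_mod_cast hN
  set M : ℝ := (N : ℝ) ^ ((1:ℝ) / (6 * K)) with hMdef
  set q : ℝ := (N : ℝ) ^ (-(1:ℝ)/2 + 1 / (3 * K)) with hqdef
  set p : ℝ := (N : ℝ) ^ (-(1:ℝ)/2 + ε) with hpdef
  have hq : 0 < q := Real.rpow_pos_of_pos hN0 _
  have hp0 : 0 < p := Real.rpow_pos_of_pos hN0 _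
  have hM0 : 0 < M := by linarith
  have hp1 : p ≤ 1 := Real.rpow_le_one_of_one_le_of_nonpos hN1 (by linarith)
  have hMpow : ∀ n : ℕ, M ^ n = (N : ℝ) ^ ((n : ℝ) / (6 * K)) := by
    intro n
    rw [hMdef, ← Real.rpow_natCast, ← Real.rpow_mul hN0.le]
    congr 1; ring
  have hNM : (N : ℝ) ^ 3 = M ^ (18 * K) := by
    rw [hMpow, ← Real.rpow_natCast]
    congr 1
    push_cast
    field_simp
    norm_num
  have hqM : q * M ^ (3 * K) = M ^ 2 := by
    rw [hMpow, hMpow, hqdef, ← Real.rpow_add hN0]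
    congr 1
    push_cast
    field_simp
    ring
  have hcard : ((Fintype.card (ZMod N) : ℕ) : ℝ) = N := by rw [ZMod.card]
  have hNq2 : ((Fintype.card (ZMod N) : ℕ) : ℝ) * q ^ 2 = M ^ 4 := by
    rw [hcard, hMpow, hqdef, ← Real.rpow_natCast, ← Real.rpow_mul hN0.le]
    nth_rewrite 1 [← Real.rpow_one (N : ℝ)]
    rw [← Real.rpow_add hN0]
    congr 1
    push_cast
    field_simp
    ring
  have hNq : M ≤ ((Fintype.card (ZMod N) : ℕ) : ℝ) * q := by
    rw [hcard, hMdef, hqdef]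
    nth_rewrite 2 [← Real.rpow_one (N : ℝ)]
    rw [← Real.rpow_add hN0]
    apply Real.rpow_le_rpow_of_exponent_le hN1
    have : (1:ℝ) / (6 * K) ≤ 1 / (3 * K) := by gcongr; norm_num
    linarith
  have hqp : ((18 * K + 1 : ℕ) : ℝ) * ((2 * K + 3) * q) ≤ p := by
    have : p = (N : ℝ) ^ (ε - 1 / (3 * K)) * q := by
      rw [hpdef, hqdef, ← Real.rpow_add hN0]
      congr 1; ring
    rw [this, ← mul_assoc]
    push_cast
    gcongr
  have hqK : (2 * K + 3) * q ≤ 1 := by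
    refine le_trans ?_ (hqp.trans hp1)
    have h0 : 0 ≤ (2 * K + 3) * q := by positivity
    have h1 : (1:ℝ) ≤ ((18 * K + 1 : ℕ) : ℝ) := by push_cast; linarith
    nlinarith
  have hone : ∀ a b c : ZMod N, Pr (Finset.univ : Finset (ZMod N)) p (fun A => ¬ Good K a b c A)
      ≤ ((28 * K + 32) / M) ^ (18 * K + 1) := fun a b c =>
    Pr_amplify (by positivity) (Good_mono K a b c) (by positivity)
      (Pr_Good (by omega) hq hqK hM hNq hNq2 hqM a b c) _ p hqp hp1
  have hall : Pr (Finset.univ : Finset (ZMod N)) p (fun A => ¬ ∀ a b c, Good K a b c A)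
      ≤ (28 * K + 32 : ℝ) ^ (18 * K + 1) * (N : ℝ) ^ (-((1:ℝ) / (6 * K))) := by
    have h1 := Pr_exists (Finset.univ : Finset (ZMod N × ZMod N × ZMod N))
      (s := (Finset.univ : Finset (ZMod N))) hp0.le hp1
      (fun x A => ¬ Good K x.1 x.2.1 x.2.2 A)
    refine (Pr_mono hp0.le hp1 ?_).trans (h1.trans ?_)
    · intro A hA
      push Not at hA
      obtain ⟨a, b, c, h⟩ := hA
      exact ⟨(a, b, c), Finset.mem_univ _, h⟩
    · refine (Finset.sum_le_sum fun x _ => hone x.1 x.2.1 x.2.2).trans (le_of_eq ?_)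
      rw [Finset.sum_const, nsmul_eq_mul, Finset.card_univ, Fintype.card_prod, Fintype.card_prod,
        ZMod.card, Real.rpow_neg hN0.le, ← hMdef]
      have : ((N * (N * N) : ℕ) : ℝ) = M ^ (18 * K) := by rw [← hNM]; push_cast; ring
      rw [this, div_pow, pow_succ M]
      field_simp
  calc _ ≤ ENNReal.ofReal (Pr (Finset.univ : Finset (ZMod N)) p (fun A => ∀ a b c, Good K a b c A)) := by
        apply ENNReal.ofReal_le_ofReal
        rw [Pr_not]
        linarith
    _ = _ := (measure_eq_Pr N p hp0.le hp1 _).symm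
    _ ≤ _ := by
        apply measure_mono
        intro ω hω a b c _ _ _
        refine Lam_pos_of_Good N ?_ _ ?_ a b c i (hω a b c)
        · intro x
          exact Set.indicator_nonneg (fun _ _ => zero_le_one) x
        · intro x hx
          have hx' : ω x = true := by simpa using hx
          simp [Set.indicator, hx']

theorem exists_iter_Lam_pos_whp (ε : ℝ) (hε0 : 0 < ε) (hε : ε < 1/2) :
    ∃ i : ℕ,
      Tendsto
        (fun N : ℕ =>
          randomSubsetMeasure N (Real.toNNReal ((N : ℝ) ^ (-(1:ℝ)/2 + ε)))
            {ω | ∀ a b c : ZMod N, a ≠ b → a ≠ c → b ≠ c →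
              0 < Lam N i a b c (Set.indicator {x : ZMod N | ω x = true} fun _ => (1 : ℝ))})
        atTop (nhds 1) := by
  obtain ⟨i, hi⟩ := exists_nat_gt (1 / ε)
  refine ⟨i, ?_⟩
  have hi0 : (0:ℝ) ≤ i := Nat.cast_nonneg i
  have hiε : 1 < i * ε := by rwa [div_lt_iff₀ hε0] at hi
  have hpos : 0 < ε - 1 / (3 * (2 * i + 1)) := by
    rw [sub_pos, div_lt_iff₀ (by positivity)]
    nlinarith
  have hpos2 : 0 < (1:ℝ) / (6 * (2 * i + 1)) := by positivity
  have t1 := ((tendsto_rpow_atTop hpos2).comp tendsto_natCast_atTop_atTop).eventually_ge_atTop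
    (8:ℝ)
  have t2 := ((tendsto_rpow_atTop hpos).comp tendsto_natCast_atTop_atTop).eventually_ge_atTop
    (((18 * (2 * i + 1) + 1) * (2 * (2 * i + 1) + 3) : ℝ))
  have t3 : Tendsto (fun N : ℕ => ENNReal.ofReal (1 - (28 * (2 * i + 1) + 32 : ℝ) ^ (18 * (2 * i + 1) + 1)
        * (N : ℝ) ^ (-((1:ℝ) / (6 * (2 * i + 1)))))) atTop (nhds 1) := by
    have := ((tendsto_rpow_neg_atTop hpos2).comp (tendsto_natCast_atTop_atTop (R := ℝ))).const_mul
      ((28 * (2 * i + 1) + 32 : ℝ) ^ (18 * (2 * i + 1) + 1))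
    have := this.const_sub 1
    have := ENNReal.tendsto_ofReal this
    simpa using this
  refine tendsto_of_tendsto_of_tendsto_of_le_of_le' t3 tendsto_const_nhds ?_ ?_
  · filter_upwards [t1, t2, eventually_gt_atTop 0] with N h1 h2 h3
    exact main_bound i ε hε N h3 h1 h2
  · filter_upwards [eventually_gt_atTop 0] with N hN
    have : NeZero N := ⟨hN.ne'⟩
    have hN1 : (1:ℝ) ≤ N := by exact_mod_cast hN
    have hp1 : (N : ℝ) ^ (-(1:ℝ)/2 + ε) ≤ 1 :=
      Real.rpow_le_one_of_one_le_of_nonpos hN1 (by linarith)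
    have := measure_eq_Pr N ((N : ℝ) ^ (-(1:ℝ)/2 + ε)) (by positivity) hp1 (fun _ => True)
    refine (measure_mono (Set.subset_univ _)).trans ?_
    simp only [Set.ofPred_true] at this
    rw [this]
    simp [Pr, Ex_one]
end

section
/- There exists an absolute constant C > 0 such that for all sufficiently large N, all pairwise distinct a, b, c ∈ ZMod N, and every nonempty B ⊆ ZMod N with |B| ≤ 9, the quantity m(B) (the number of non-degenerate quadruples v ∈ (ZMod N)⁴ such that every element of B occurs among the nine coordinates of ψ(v)) satisfies: m(B) ≤ C·N^{4 - ⌈|B|/2⌉} if |B| ≤ 8, and m(B) ≤ C if |B| = 9. -/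
open Filter

/-- The map `ψ(x₁,x₂,x₃,z) = (x₁+a, x₁+b, x₁+z, x₂+a, x₂+z, x₂+c, x₃+z, x₃+b, x₃+c)`. -/
def psiBase {N : ℕ} (a b c : ZMod N) (v : ZMod N × ZMod N × ZMod N × ZMod N) :
    Fin 9 → ZMod N :=
  ![v.1 + a, v.1 + b, v.1 + v.2.2.2,
    v.2.1 + a, v.2.1 + v.2.2.2, v.2.1 + c,
    v.2.2.1 + v.2.2.2, v.2.2.1 + b, v.2.2.1 + c]

/-- The seven quantities `x₁, x₂, x₃, z, a, b, c`. -/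
def val7 {N : ℕ} (a b c : ZMod N) (v : ZMod N × ZMod N × ZMod N × ZMod N) :
    Fin 7 → ZMod N :=
  ![v.1, v.2.1, v.2.2.1, v.2.2.2, a, b, c]

/-- A quadruple `(x₁,x₂,x₃,z)` is degenerate if it satisfies a nontrivial relation
`ε₁y₁ + ε₂y₂ + ε₃y₃ + ε₄y₄ = 0` with `εⱼ ∈ {-1,0,1}`,
`yⱼ ∈ {x₁,x₂,x₃,z,a,b,c}`, where the relation does not vanish identically as a formal
linear combination and at least one `yⱼ` with `εⱼ ≠ 0` lies in `{x₁,x₂,x₃,z}`. -/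
def DegenerateBase {N : ℕ} (a b c : ZMod N) (v : ZMod N × ZMod N × ZMod N × ZMod N) :
    Prop :=
  ∃ (ε : Fin 4 → ℤ) (y : Fin 4 → Fin 7),
    (∀ j, ε j = -1 ∨ ε j = 0 ∨ ε j = 1) ∧
    (∑ j : Fin 4, (ε j : ZMod N) * val7 a b c v (y j)) = 0 ∧
    (∃ k : Fin 7, (∑ j : Fin 4, if y j = k then ε j else 0) ≠ 0) ∧
    (∃ j : Fin 4, ε j ≠ 0 ∧ (y j : ℕ) < 4)

/-- `m(B)`: the number of non-degenerate quadruples `v` such that every element of `B`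
occurs among the nine coordinates of `ψ(v)`. -/
noncomputable def mBase {N : ℕ} (a b c : ZMod N) (B : Finset (ZMod N)) : ℕ :=
  Set.ncard {v : ZMod N × ZMod N × ZMod N × ZMod N |
    ¬ DegenerateBase a b c v ∧ ∀ x ∈ B, ∃ j : Fin 9, psiBase a b c v j = x}

/-- Coordinates of `v`, with an extra fifth vertex (the ground) of value zero. -/
def hval {N : ℕ} (v : ZMod N × ZMod N × ZMod N × ZMod N) : Fin 5 → ZMod N :=
  ![v.1, v.2.1, v.2.2.1, v.2.2.2, 0]

/-- First endpoint of the edge associated with a coordinate of `ψ`. -/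
def hp : Fin 9 → Fin 5 := ![0, 0, 0, 1, 1, 1, 2, 2, 2]

/-- Second endpoint. -/
def hq : Fin 9 → Fin 5 := ![4, 4, 3, 4, 3, 4, 3, 4, 4]

/-- Constant term. -/
def hc {N : ℕ} (a b c : ZMod N) : Fin 9 → ZMod N := ![a, b, 0, a, 0, c, 0, b, c]

lemma psi_eq {N : ℕ} (a b c : ZMod N) (v : ZMod N × ZMod N × ZMod N × ZMod N) (j : Fin 9) :
    psiBase a b c v j = hval v (hp j) + hval v (hq j) + hc a b c j := by
  fin_cases j <;> simp [psiBase, hval, hp, hq, hc]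

/-- One round of propagation of known vertices along the edges in `S`. -/
def hstep (S : Finset (Fin 9)) (K : Finset (Fin 5)) : Finset (Fin 5) :=
  Finset.univ.filter fun u => u ∈ K ∨ ∃ e ∈ S, (hp e = u ∧ hq e ∈ K) ∨ (hq e = u ∧ hp e ∈ K)

lemma hstep_sound {N : ℕ} (a b c : ZMod N) (v w : ZMod N × ZMod N × ZMod N × ZMod N)
    (S : Finset (Fin 9)) (K : Finset (Fin 5))
    (hS : ∀ e ∈ S, psiBase a b c v e = psiBase a b c w e)
    (hK : ∀ u ∈ K, hval v u = hval w u) : ∀ u ∈ hstep S K, hval v u = hval w u := by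
  intro u hu
  simp only [hstep, Finset.mem_filter, Finset.mem_univ, true_and] at hu
  rcases hu with hu | ⟨e, he, ⟨rfl, h⟩ | ⟨rfl, h⟩⟩
  · exact hK u hu
  · have h1 := hS e he
    rw [psi_eq, psi_eq, hK _ h] at h1
    simpa using h1
  · have h1 := hS e he
    rw [psi_eq, psi_eq, hK _ h] at h1
    simpa using h1

/-- The initially known vertices. -/
def hinit (F : Finset (Fin 4)) : Finset (Fin 5) := insert 4 (F.image Fin.castSucc)

set_option maxRecDepth 100000 in
lemma comb : ∀ S : Finset (Fin 9), ∃ F : Finset (Fin 4),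
    F.card + min ((S.card + 1) / 2) 4 ≤ 4 ∧
    ∀ u, u ∈ hstep S (hstep S (hstep S (hstep S (hinit F)))) := by
  decide +kernel

lemma fiber_bound {N : ℕ} [NeZero N] (a b c : ZMod N) (S : Finset (Fin 9)) (w : Fin 9 → ZMod N) :
    Set.ncard {v : ZMod N × ZMod N × ZMod N × ZMod N | ∀ e ∈ S, psiBase a b c v e = w e}
      ≤ N ^ (4 - (S.card + 1) / 2) := by
  obtain ⟨F, hF, hcl⟩ := comb S
  have key : Set.ncard {v : ZMod N × ZMod N × ZMod N × ZMod N |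
      ∀ e ∈ S, psiBase a b c v e = w e} ≤ Set.ncard (Set.univ : Set (F → ZMod N)) := by
    apply Set.ncard_le_ncard_of_injOn (fun v (i : F) => hval v (Fin.castSucc i.1))
    · intro v _
      exact Set.mem_univ _
    · intro v hv v' hv' h
      have hS : ∀ e ∈ S, psiBase a b c v e = psiBase a b c v' e := fun e he =>
        (hv e he).trans (hv' e he).symm
      have h0 : ∀ u ∈ hinit F, hval v u = hval v' u := by
        intro u hu
        simp only [hinit, Finset.mem_insert, Finset.mem_image] at hu
        rcases hu with rfl | ⟨i, hi, rfl⟩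
        · simp [hval]
        · exact congrFun h ⟨i, hi⟩
      have h4 := hstep_sound a b c v v' S _ hS (hstep_sound a b c v v' S _ hS
        (hstep_sound a b c v v' S _ hS (hstep_sound a b c v v' S _ hS h0)))
      have e0 := h4 0 (hcl 0)
      have e1 := h4 1 (hcl 1)
      have e2 := h4 2 (hcl 2)
      have e3 := h4 3 (hcl 3)
      simp [hval] at e0 e1 e2 e3
      ext <;> assumption
  refine key.trans ?_
  rw [Set.ncard_univ, Nat.card_eq_fintype_card, Fintype.card_fun, ZMod.card, Fintype.card_coe]
  apply Nat.pow_le_pow_right (Nat.pos_of_ne_zero (NeZero.ne N))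
  omega

lemma mBase_le {N : ℕ} [NeZero N] (a b c : ZMod N) (B : Finset (ZMod N)) :
    mBase a b c B ≤ 9 ^ B.card * N ^ (4 - (B.card + 1) / 2) := by
  classical
  let G : (B → Fin 9) → Set (ZMod N × ZMod N × ZMod N × ZMod N) := fun t =>
    {v | ∀ x : B, psiBase a b c v (t x) = x}
  have hG : ∀ t, (G t).ncard ≤ N ^ (4 - (B.card + 1) / 2) := by
    intro t
    by_cases ht : Function.Injective t
    · have h := fiber_bound a b c (Finset.univ.image t)
        (fun j => if h : ∃ x, t x = j then (h.choose : ZMod N) else 0)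
      rw [Finset.card_image_of_injective _ ht, Finset.card_univ, Fintype.card_coe] at h
      refine le_trans (Set.ncard_le_ncard ?_ (Set.toFinite _)) h
      intro v hv e he
      simp only [Finset.mem_image, Finset.mem_univ, true_and] at he
      rw [dif_pos he]
      have := hv he.choose
      rwa [he.choose_spec] at this
    · have : G t = ∅ := by
        rw [Set.eq_empty_iff_forall_notMem]
        intro v hv
        apply ht
        intro x y hxy
        apply Subtype.ext
        rw [← hv x, ← hv y, hxy]
      simp [this]
  have hsub : {v : ZMod N × ZMod N × ZMod N × ZMod N |
      ¬ DegenerateBase a b c v ∧ ∀ x ∈ B, ∃ j : Fin 9, psiBase a b c v j = x} ⊆ ⋃ t, G t := by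
    rintro v ⟨_, hv⟩
    choose t ht using fun x : B => hv x x.2
    exact Set.mem_iUnion.2 ⟨t, ht⟩
  calc mBase a b c B ≤ (⋃ t, G t).ncard := Set.ncard_le_ncard hsub (Set.toFinite _)
    _ ≤ ∑ t, (G t).ncard := Set.ncard_iUnion_le_of_fintype G
    _ ≤ ∑ _t : B → Fin 9, N ^ (4 - (B.card + 1) / 2) := Finset.sum_le_sum fun t _ => hG t
    _ = _ := by simp

theorem mBase_bound :
    ∃ C : ℝ, 0 < C ∧ ∀ᶠ N : ℕ in atTop,
      ∀ a b c : ZMod N, a ≠ b → a ≠ c → b ≠ c →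
        ∀ B : Finset (ZMod N), B.Nonempty → B.card ≤ 9 →
          (B.card ≤ 8 →
            (mBase a b c B : ℝ) ≤ C * (N : ℝ) ^ (4 - (B.card + 1) / 2 : ℕ)) ∧
          (B.card = 9 → (mBase a b c B : ℝ) ≤ C) := by
  refine ⟨9 ^ 9, by norm_num, ?_⟩
  filter_upwards [eventually_gt_atTop 0] with N hN a b c _ _ _ B _ hB
  have : NeZero N := ⟨hN.ne'⟩
  have h : mBase a b c B ≤ 9 ^ 9 * N ^ (4 - (B.card + 1) / 2) :=
    (mBase_le a b c B).trans
      (Nat.mul_le_mul_right _ (Nat.pow_le_pow_right (by norm_num) hB))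
  have h' : (mBase a b c B : ℝ) ≤ 9 ^ 9 * (N : ℝ) ^ (4 - (B.card + 1) / 2 : ℕ) := by
    exact_mod_cast h
  refine ⟨fun _ => h', fun h9 => ?_⟩
  rw [h9] at h'
  simpa using h'
end

section
/- Let (ψ^i)_{i ≥ 0} be any admissible family of maps over ZMod N. Then for every i ≥ 0 and every coordinate index j ∈ {1, …, 2d_i + 1} there exist input positions s_j ∈ {a, b, c, v₁, …, v_{d_i}} and y_j ∈ {v₁, …, v_{d_i}} with s_j ≠ y_j such that for all inputs the j-th coordinate of ψ^i(a,b,c,v) equals the sum of the values at positions s_j and y_j; moreover the unordered pairs {s_j, y_j} of input positions are pairwise distinct as j ranges over 1, …, 2d_i + 1. -/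
/-- `dd i = (3^(i+1) - 1)/2`, the number of free parameters of `Λ^i`. -/
def dd : ℕ → ℕ
  | 0 => 1
  | (i + 1) => 3 * dd i + 1

theorem dd_succ (i : ℕ) : dd (i + 1) = 3 * dd i + 1 := rfl

/-- Assemble `(a, b, c)` and a `dd i`-tuple `v` into a single input tuple of `ψ^i`;
positions `0, 1, 2` carry `a, b, c` and position `3 + k` carries `v k`. -/
def abcv {N : ℕ} (i : ℕ) (a b c : ZMod N) (v : Fin (dd i) → ZMod N) :
    Fin (3 + dd i) → ZMod N :=
  fun j =>
    if h0 : (j : ℕ) = 0 then a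
    else if h1 : (j : ℕ) = 1 then b
    else if h2 : (j : ℕ) = 2 then c
    else v ⟨(j : ℕ) - 3, by have := j.isLt; omega⟩

/-- Concatenation `v₁ ⊕ v₂ ⊕ v₃ ⊕ z` of three `dd i`-tuples and one extra entry,
giving a `dd (i+1)`-tuple. -/
def vcat {N : ℕ} (i : ℕ) (v₁ v₂ v₃ : Fin (dd i) → ZMod N) (z : ZMod N) :
    Fin (dd (i + 1)) → ZMod N :=
  fun j =>
    if h1 : (j : ℕ) < dd i then v₁ ⟨(j : ℕ), h1⟩
    else if h2 : (j : ℕ) < 2 * dd i then v₂ ⟨(j : ℕ) - dd i, by omega⟩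
    else if h3 : (j : ℕ) < 3 * dd i then v₃ ⟨(j : ℕ) - 2 * dd i, by omega⟩
    else z

/-- Concatenation `u₁ ⊕ u₂ ⊕ u₃` of three output tuples of `ψ^i`, giving an output
tuple of `ψ^{i+1}`. -/
def ocat {N : ℕ} (i : ℕ) (u₁ u₂ u₃ : Fin (2 * dd i + 1) → ZMod N) :
    Fin (2 * dd (i + 1) + 1) → ZMod N :=
  fun j =>
    if h1 : (j : ℕ) < 2 * dd i + 1 then u₁ ⟨(j : ℕ), h1⟩
    else if h2 : (j : ℕ) < 2 * (2 * dd i + 1) then u₂ ⟨(j : ℕ) - (2 * dd i + 1), by omega⟩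
    else u₃ ⟨(j : ℕ) - 2 * (2 * dd i + 1), by
      have := j.isLt; have hd := dd_succ i; omega⟩

/-- A family `(ψ^i)` is admissible if `ψ⁰(a,b,c,x) = (x+a, x+b, x+c)` and
`ψ^{i+1}(a,b,c, v₁⊕v₂⊕v₃⊕z) = ψ^i(a,b,z,v₁) ⊕ ψ^i(a,z,c,v₂) ⊕ ψ^i(z,b,c,v₃)`. -/
def Admissible (N : ℕ)
    (ψ : ∀ i, (Fin (3 + dd i) → ZMod N) → (Fin (2 * dd i + 1) → ZMod N)) : Prop :=
  (∀ (w : Fin (3 + dd 0) → ZMod N) (j : Fin (2 * dd 0 + 1)),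
      ψ 0 w j = w ⟨3, by have h : dd 0 = 1 := rfl; omega⟩ +
        w ⟨(j : ℕ), by have := j.isLt; have h : dd 0 = 1 := rfl; omega⟩) ∧
  (∀ (i : ℕ) (a b c z : ZMod N) (v₁ v₂ v₃ : Fin (dd i) → ZMod N),
      ψ (i + 1) (abcv (i + 1) a b c (vcat i v₁ v₂ v₃ z)) =
        ocat i (ψ i (abcv i a b z v₁)) (ψ i (abcv i a z c v₂)) (ψ i (abcv i z b c v₃)))

/-- Position in the input of `ψ^{i+1}` (with `d = dd i`) of the `x`-th input of its `t`-th block. -/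
def blockPos (d t x : ℕ) : ℕ :=
  if x < 3 then (if x + t = 2 then 3 + 3 * d else x) else x + t * d

theorem blockPos_cases (d t x : ℕ) :
    (x < 3 ∧ x + t = 2 ∧ blockPos d t x = 3 + 3 * d) ∨
    (x < 3 ∧ x + t ≠ 2 ∧ blockPos d t x = x) ∨ (3 ≤ x ∧ blockPos d t x = x + t * d) := by
  unfold blockPos
  split_ifs <;> omega

theorem blockPos_inj (d t x x' : ℕ) (ht : t < 3) (hx : x < 3 + d) (hx' : x' < 3 + d)
    (h : blockPos d t x = blockPos d t x') : x = x' := by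
  have h1 := blockPos_cases d t x
  have h2 := blockPos_cases d t x'
  interval_cases t <;> omega

theorem blockPos_sep (d t t' x y x' y' : ℕ) (ht : t < 3) (ht' : t' < 3)
    (hx : x < 3 + d) (hy : y < 3 + d) (hx' : x' < 3 + d) (hy' : y' < 3 + d)
    (hy3 : 3 ≤ y) (hy3' : 3 ≤ y')
    (h : (blockPos d t x = blockPos d t' x' ∧ blockPos d t y = blockPos d t' y') ∨
      (blockPos d t x = blockPos d t' y' ∧ blockPos d t y = blockPos d t' x')) : t = t' := by
  have h1 := blockPos_cases d t x
  have h2 := blockPos_cases d t' x'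
  have h3 := blockPos_cases d t y
  have h4 := blockPos_cases d t' y'
  interval_cases t <;> interval_cases t' <;> omega

theorem admissible_aux (N : ℕ)
    (ψ : ∀ i, (Fin (3 + dd i) → ZMod N) → (Fin (2 * dd i + 1) → ZMod N))
    (hψ : Admissible N ψ) (i : ℕ) :
    ∃ s y : ℕ → ℕ,
      (∀ j, j < 2 * dd i + 1 → 3 ≤ y j ∧ y j < 3 + dd i ∧ s j < 3 + dd i ∧ s j ≠ y j) ∧
      (∀ (w : ℕ → ZMod N) (j : Fin (2 * dd i + 1)),
        ψ i (fun k => w k) j = w (s j) + w (y j)) ∧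
      (∀ j k, j < 2 * dd i + 1 → k < 2 * dd i + 1 →
        ((s j = s k ∧ y j = y k) ∨ (s j = y k ∧ y j = s k)) → j = k) := by
  obtain ⟨h0, hs⟩ := hψ
  induction i with
  | zero =>
    have hd : dd 0 = 1 := rfl
    refine ⟨fun j => j, fun _ => 3, ?_, ?_, ?_⟩
    · intro j hj; simp only; omega
    · intro w j; rw [h0, add_comm]
    · intro j k hj hk h; simp only at h; omega
  | succ i ih =>
    obtain ⟨s, y, hb, hv, hi⟩ := ih
    have hd := dd_succ i
    have hdiv : ∀ j, j < 2 * dd (i + 1) + 1 → j / (2 * dd i + 1) < 3 := by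
      intro j hj
      rw [Nat.div_lt_iff_lt_mul (by omega)]; omega
    have hmod : ∀ j, j % (2 * dd i + 1) < 2 * dd i + 1 := fun j => Nat.mod_lt _ (by omega)
    refine ⟨fun j => blockPos (dd i) (j / (2 * dd i + 1)) (s (j % (2 * dd i + 1))),
      fun j => blockPos (dd i) (j / (2 * dd i + 1)) (y (j % (2 * dd i + 1))), ?_, ?_, ?_⟩
    · intro j hj
      have ht := hdiv j hj
      obtain ⟨b1, b2, b3, b4⟩ := hb _ (hmod j)
      simp only
      generalize j / (2 * dd i + 1) = t at *
      generalize s (j % (2 * dd i + 1)) = x at *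
      generalize y (j % (2 * dd i + 1)) = x' at *
      have h1 := blockPos_cases (dd i) t x
      have h2 := blockPos_cases (dd i) t x'
      have h3 := blockPos_inj (dd i) t x x' ht b3 b2
      refine ⟨?_, ?_, ?_, fun h => b4 (h3 h)⟩ <;> clear h3 <;> interval_cases t <;> omega
    · intro w j
      have e : (fun k : Fin (3 + dd (i + 1)) => w k) =
          abcv (i + 1) (w 0) (w 1) (w 2) (vcat i (fun k => w (3 + k))
            (fun k => w (3 + dd i + k)) (fun k => w (3 + 2 * dd i + k)) (w (3 + 3 * dd i))) := by
        funext k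
        have := k.isLt
        simp only [abcv, vcat]
        split_ifs <;> congr 1 <;> omega
      have e1 : abcv i (w 0) (w 1) (w (3 + 3 * dd i)) (fun k => w (3 + k)) =
          fun k : Fin (3 + dd i) => (fun x : ℕ => w (blockPos (dd i) 0 x)) (k : ℕ) := by
        funext k
        have := blockPos_cases (dd i) 0 k
        simp only [abcv]
        split_ifs <;> congr 1 <;> omega
      have e2 : abcv i (w 0) (w (3 + 3 * dd i)) (w 2) (fun k => w (3 + dd i + k)) =
          fun k : Fin (3 + dd i) => (fun x : ℕ => w (blockPos (dd i) 1 x)) (k : ℕ) := by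
        funext k
        have := blockPos_cases (dd i) 1 k
        simp only [abcv]
        split_ifs <;> congr 1 <;> omega
      have e3 : abcv i (w (3 + 3 * dd i)) (w 1) (w 2) (fun k => w (3 + 2 * dd i + k)) =
          fun k : Fin (3 + dd i) => (fun x : ℕ => w (blockPos (dd i) 2 x)) (k : ℕ) := by
        funext k
        have := blockPos_cases (dd i) 2 k
        simp only [abcv]
        split_ifs <;> congr 1 <;> omega
      have key : ∀ t r : ℕ, r < 2 * dd i + 1 → (j : ℕ) = r + (2 * dd i + 1) * t →
          (j : ℕ) / (2 * dd i + 1) = t ∧ (j : ℕ) % (2 * dd i + 1) = r := by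
        intro t r hr hj
        rw [hj, Nat.add_mul_div_left _ _ (by omega), Nat.add_mul_mod_self_left,
          Nat.div_eq_of_lt hr, Nat.mod_eq_of_lt hr]
        simp
      have hj := j.isLt
      rw [e, hs, e1, e2, e3]
      simp only [ocat]
      split_ifs with c1 c2
      · rw [hv (fun x : ℕ => w (blockPos (dd i) _ x))]
        obtain ⟨k1, k2⟩ := key 0 j (by omega) (by omega)
        simp only [k1, k2]
      · rw [hv (fun x : ℕ => w (blockPos (dd i) _ x))]
        obtain ⟨k1, k2⟩ := key 1 (j - (2 * dd i + 1)) (by omega) (by omega)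
        simp only [k1, k2]
      · rw [hv (fun x : ℕ => w (blockPos (dd i) _ x))]
        obtain ⟨k1, k2⟩ := key 2 (j - 2 * (2 * dd i + 1)) (by omega) (by omega)
        simp only [k1, k2]
    · intro j k hj hk h
      simp only at h
      obtain ⟨b1, b2, b3, b4⟩ := hb _ (hmod j)
      obtain ⟨c1, c2, c3, c4⟩ := hb _ (hmod k)
      have ht := blockPos_sep _ _ _ _ _ _ _ (hdiv j hj) (hdiv k hk) b3 b2 c3 c2 b1 c1 h
      have hm : j % (2 * dd i + 1) = k % (2 * dd i + 1) := by
        apply hi _ _ (hmod j) (hmod k)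
        rw [ht] at h
        have hk' := hdiv k hk
        rcases h with ⟨p, q⟩ | ⟨p, q⟩
        · exact Or.inl ⟨blockPos_inj _ _ _ _ hk' b3 c3 p, blockPos_inj _ _ _ _ hk' b2 c2 q⟩
        · exact Or.inr ⟨blockPos_inj _ _ _ _ hk' b3 c2 p, blockPos_inj _ _ _ _ hk' b2 c3 q⟩
      rw [← Nat.div_add_mod j (2 * dd i + 1), ht, hm, Nat.div_add_mod]

theorem admissible_coords_are_sums_of_pairs (N : ℕ)
    (ψ : ∀ i, (Fin (3 + dd i) → ZMod N) → (Fin (2 * dd i + 1) → ZMod N))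
    (hψ : Admissible N ψ) (i : ℕ) :
    ∃ s y : Fin (2 * dd i + 1) → Fin (3 + dd i),
      (∀ j, 3 ≤ (y j : ℕ)) ∧
      (∀ j, s j ≠ y j) ∧
      (∀ (w : Fin (3 + dd i) → ZMod N) (j), ψ i w j = w (s j) + w (y j)) ∧
      Function.Injective (fun j => ({s j, y j} : Finset (Fin (3 + dd i)))) := by
  obtain ⟨s, y, hb, hv, hi⟩ := admissible_aux N ψ hψ i
  refine ⟨fun j => ⟨s j, (hb j j.isLt).2.2.1⟩, fun j => ⟨y j, (hb j j.isLt).2.1⟩,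
    fun j => (hb j j.isLt).1, fun j h => (hb j j.isLt).2.2.2 (Fin.mk.inj h), ?_, ?_⟩
  · intro w j
    have := hv (fun k => if h : k < 3 + dd i then w ⟨k, h⟩ else 0) j
    simpa [(hb j j.isLt).2.2.1, (hb j j.isLt).2.1] using this
  · intro j k h
    apply Fin.ext
    apply hi _ _ j.isLt k.isLt
    simp only at h
    have h1 := congrArg (fun t : Finset (Fin (3 + dd i)) => (t : Set (Fin (3 + dd i)))) h
    simp only [Finset.coe_insert, Finset.coe_singleton] at h1
    simpa [Set.pair_eq_pair_iff, Fin.ext_iff] using h1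
end

section
/- Let (ψ^i)_{i ≥ 0} be any admissible family of maps over ZMod N. Then for every i ≥ 0 and all fixed a, b ∈ ZMod N, the map (ZMod N)^{d_i} × ZMod N → (ZMod N)^{2d_i+1} given by (v, z) ↦ ψ^i(a, b, z, v) is injective. -/
theorem ocat_inj {N : ℕ} (i : ℕ) {u₁ u₂ u₃ w₁ w₂ w₃ : Fin (2 * dd i + 1) → ZMod N}
    (h : ocat i u₁ u₂ u₃ = ocat i w₁ w₂ w₃) : u₁ = w₁ ∧ u₂ = w₂ ∧ u₃ = w₃ := by
  have hd := dd_succ i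
  refine ⟨?_, ?_, ?_⟩
  · funext j
    have hj := j.isLt
    have := congrFun h ⟨j, by omega⟩
    simpa only [ocat, hj, dif_pos] using this
  · funext j
    have hj := j.isLt
    have := congrFun h ⟨(2 * dd i + 1) + j, by omega⟩
    have e1 : ¬ (2 * dd i + 1 + (j : ℕ) < 2 * dd i + 1) := by omega
    have e2 : 2 * dd i + 1 + (j : ℕ) < 2 * (2 * dd i + 1) := by omega
    simpa only [ocat, e1, e2, dif_pos, dif_neg, not_false_eq_true, Nat.add_sub_cancel_left]
      using this
  · funext j
    have hj := j.isLt
    have := congrFun h ⟨2 * (2 * dd i + 1) + j, by omega⟩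
    have e1 : ¬ (2 * (2 * dd i + 1) + (j : ℕ) < 2 * dd i + 1) := by omega
    have e2 : ¬ (2 * (2 * dd i + 1) + (j : ℕ) < 2 * (2 * dd i + 1)) := by omega
    simpa only [ocat, e1, e2, dif_pos, dif_neg, not_false_eq_true, Nat.add_sub_cancel_left]
      using this

theorem vcat_surj {N : ℕ} (i : ℕ) (v : Fin (dd (i + 1)) → ZMod N) :
    ∃ v₁ v₂ v₃ z, v = vcat i v₁ v₂ v₃ z := by
  have hd := dd_succ i
  refine ⟨fun j => v ⟨j, by omega⟩, fun j => v ⟨dd i + j, by omega⟩,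
    fun j => v ⟨2 * dd i + j, by omega⟩, v ⟨3 * dd i, by omega⟩, ?_⟩
  funext j
  have hj := j.isLt
  unfold vcat
  split_ifs with h1 h2 h3
  · rfl
  · congr 1; ext; simp only; omega
  · congr 1; ext; simp only; omega
  · congr 1; ext; simp only; omega

theorem admissible_injective_in_v_z (N : ℕ)
    (ψ : ∀ i, (Fin (3 + dd i) → ZMod N) → (Fin (2 * dd i + 1) → ZMod N))
    (hψ : Admissible N ψ) (i : ℕ) (a b : ZMod N) :
    Function.Injective
      (fun vz : (Fin (dd i) → ZMod N) × ZMod N =>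
        ψ i (abcv i a b vz.2 vz.1)) := by
  induction i generalizing a b with
  | zero =>
    rintro ⟨v, z⟩ ⟨w, y⟩ h
    have h0 := congrFun h ⟨0, by decide⟩
    have h2 := congrFun h ⟨2, by decide⟩
    simp only [hψ.1] at h0 h2
    simp [abcv] at h0 h2
    have hvw : v = w := by
      funext j
      have hj : j = ⟨0, by decide⟩ := by
        have := j.isLt
        have h : dd 0 = 1 := rfl
        ext; simp only; omega
      rw [hj]; exact h0
    subst hvw
    simpa using h2
  | succ i ih =>
    rintro ⟨v, c⟩ ⟨w, c'⟩ h
    obtain ⟨v₁, v₂, v₃, z, rfl⟩ := vcat_surj i v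
    obtain ⟨w₁, w₂, w₃, y, rfl⟩ := vcat_surj i w
    simp only [hψ.2] at h
    obtain ⟨h1, h2, h3⟩ := ocat_inj i h
    have e1 := @ih a b (v₁, z) (w₁, y) h1
    obtain ⟨rfl, rfl⟩ := Prod.mk.inj e1
    have e2 := @ih a z (v₂, c) (w₂, c') h2
    obtain ⟨rfl, rfl⟩ := Prod.mk.inj e2
    have e3 := @ih z b (v₃, c) (w₃, c) h3
    obtain ⟨rfl, -⟩ := Prod.mk.inj e3
    rfl
end

section
/- Let (ψ^i)_{i ≥ 0} be any admissible family of maps over ZMod N. For every i ≥ 0 there is a constant C_i > 0, depending only on i, such that for all sufficiently large N, all pairwise distinct a, b, c ∈ ZMod N, and every nonempty B ⊆ ZMod N with |B| ≤ 2d_i + 1, the quantity m(B) (the number of non-degenerate d_i-tuples v such that every element of B occurs among the 2d_i + 1 coordinates of ψ^i(a,b,c,v)) satisfies: m(B) ≤ C_i·N^{d_i − ⌈|B|/2⌉} if |B| < 2d_i + 1, and m(B) ≤ C_i if |B| = 2d_i + 1. -/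
open Filter

/-- The `dd i + 3` quantities `v₁, …, v_{dd i}, a, b, c`: position `k < dd i` carries
`v k`, and positions `dd i, dd i + 1, dd i + 2` carry `a, b, c`. -/
def valGen {N : ℕ} (i : ℕ) (a b c : ZMod N) (v : Fin (dd i) → ZMod N) :
    Fin (dd i + 3) → ZMod N :=
  fun k =>
    if h : (k : ℕ) < dd i then v ⟨(k : ℕ), h⟩
    else if (k : ℕ) = dd i then a
    else if (k : ℕ) = dd i + 1 then b
    else c

/-- A `dd i`-tuple `v` is degenerate if it satisfies a nontrivial relation
`ε₁y₁ + ε₂y₂ + ε₃y₃ + ε₄y₄ = 0` with `εⱼ ∈ {-1,0,1}`, `yⱼ ∈ {v₁,…,v_{dd i},a,b,c}`,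
where the relation does not vanish identically as a formal linear combination and at
least one `yⱼ` with `εⱼ ≠ 0` lies in `{v₁,…,v_{dd i}}`. -/
def DegenerateGen {N : ℕ} (i : ℕ) (a b c : ZMod N) (v : Fin (dd i) → ZMod N) : Prop :=
  ∃ (ε : Fin 4 → ℤ) (y : Fin 4 → Fin (dd i + 3)),
    (∀ j, ε j = -1 ∨ ε j = 0 ∨ ε j = 1) ∧
    (∑ j : Fin 4, (ε j : ZMod N) * valGen i a b c v (y j)) = 0 ∧
    (∃ k : Fin (dd i + 3), (∑ j : Fin 4, if y j = k then ε j else 0) ≠ 0) ∧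
    (∃ j : Fin 4, ε j ≠ 0 ∧ (y j : ℕ) < dd i)

/-- `m(B)`: the number of non-degenerate `dd i`-tuples `v` such that every element of
`B` occurs among the `2 * dd i + 1` coordinates of `Ψ (abcv i a b c v)`. -/
noncomputable def mGen {N : ℕ} (i : ℕ)
    (Ψ : (Fin (3 + dd i) → ZMod N) → (Fin (2 * dd i + 1) → ZMod N))
    (a b c : ZMod N) (B : Finset (ZMod N)) : ℕ :=
  Set.ncard {v : Fin (dd i) → ZMod N |
    ¬ DegenerateGen i a b c v ∧
    ∀ x ∈ B, ∃ j : Fin (2 * dd i + 1), Ψ (abcv i a b c v) j = x}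


/-- index maps for the three blocks of inputs -/
def ip (i : ℕ) (s : Fin 3) (k : Fin (dd i)) : Fin (dd (i + 1)) :=
  ⟨s * dd i + k, by
    have := dd_succ i
    have := k.isLt
    fin_cases s <;> simp <;> omega⟩

def iz (i : ℕ) : Fin (dd (i + 1)) := ⟨3 * dd i, by have := dd_succ i; omega⟩

/-- index maps for the three blocks of outputs -/
def oq (i : ℕ) (s : Fin 3) (k : Fin (2 * dd i + 1)) : Fin (2 * dd (i + 1) + 1) :=
  ⟨s * (2 * dd i + 1) + k, by
    have := dd_succ i
    have := k.isLt
    fin_cases s <;> simp <;> omega⟩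

lemma ip_cases (i : ℕ) (k : Fin (dd (i + 1))) :
    (∃ k', k = ip i 0 k') ∨ (∃ k', k = ip i 1 k') ∨ (∃ k', k = ip i 2 k') ∨ k = iz i := by
  have hk := k.isLt
  have := dd_succ i
  by_cases h1 : (k : ℕ) < dd i
  · exact Or.inl ⟨⟨k, h1⟩, Fin.ext (by simp [ip])⟩
  by_cases h2 : (k : ℕ) < 2 * dd i
  · exact Or.inr (Or.inl ⟨⟨k - dd i, by omega⟩, Fin.ext (by simp [ip]; omega)⟩)
  by_cases h3 : (k : ℕ) < 3 * dd i
  · exact Or.inr (Or.inr (Or.inl ⟨⟨k - 2 * dd i, by omega⟩, Fin.ext (by simp [ip]; omega)⟩))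
  · exact Or.inr (Or.inr (Or.inr (Fin.ext (by simp [iz]; omega))))

lemma vcat_ip0 {N : ℕ} (i : ℕ) (v₁ v₂ v₃ : Fin (dd i) → ZMod N) (z : ZMod N) (k : Fin (dd i)) :
    vcat i v₁ v₂ v₃ z (ip i 0 k) = v₁ k := by
  simp [vcat, ip]

lemma vcat_ip1 {N : ℕ} (i : ℕ) (v₁ v₂ v₃ : Fin (dd i) → ZMod N) (z : ZMod N) (k : Fin (dd i)) :
    vcat i v₁ v₂ v₃ z (ip i 1 k) = v₂ k := by
  have := k.isLt
  have h : dd i + (k : ℕ) < 2 * dd i := by omega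
  simp [vcat, ip, h]

lemma vcat_ip2 {N : ℕ} (i : ℕ) (v₁ v₂ v₃ : Fin (dd i) → ZMod N) (z : ZMod N) (k : Fin (dd i)) :
    vcat i v₁ v₂ v₃ z (ip i 2 k) = v₃ k := by
  have := k.isLt
  have h0 : ¬ (2 * dd i + (k : ℕ) < dd i) := by omega
  have h : 2 * dd i + (k : ℕ) < 3 * dd i := by omega
  simp [vcat, ip, h, h0]

lemma vcat_iz {N : ℕ} (i : ℕ) (v₁ v₂ v₃ : Fin (dd i) → ZMod N) (z : ZMod N) :
    vcat i v₁ v₂ v₃ z (iz i) = z := by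
  have h0 : ¬ (3 * dd i < dd i) := by omega
  have h1 : ¬ (3 * dd i < 2 * dd i) := by omega
  simp [vcat, iz, h0, h1]

lemma vcat_split {N : ℕ} (i : ℕ) (v : Fin (dd (i + 1)) → ZMod N) :
    v = vcat i (fun k => v (ip i 0 k)) (fun k => v (ip i 1 k)) (fun k => v (ip i 2 k))
      (v (iz i)) := by
  funext k
  rcases ip_cases i k with ⟨k', rfl⟩ | ⟨k', rfl⟩ | ⟨k', rfl⟩ | rfl
  · rw [vcat_ip0]
  · rw [vcat_ip1]
  · rw [vcat_ip2]
  · rw [vcat_iz]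

lemma ocat_oq0 {N : ℕ} (i : ℕ) (u₁ u₂ u₃ : Fin (2 * dd i + 1) → ZMod N) (k) :
    ocat i u₁ u₂ u₃ (oq i 0 k) = u₁ k := by
  have := k.isLt
  have h0 : ((oq i 0 k : Fin _) : ℕ) = k := by simp [oq]
  unfold ocat
  rw [dif_pos (by omega)]
  congr 1; ext; exact h0

lemma ocat_oq1 {N : ℕ} (i : ℕ) (u₁ u₂ u₃ : Fin (2 * dd i + 1) → ZMod N) (k) :
    ocat i u₁ u₂ u₃ (oq i 1 k) = u₂ k := by
  have := k.isLt
  have h : 2 * dd i + 1 + (k : ℕ) < 2 * (2 * dd i + 1) := by omega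
  have h0 : ¬ (2 * dd i + 1 + (k : ℕ) < 2 * dd i + 1) := by omega
  simp only [ocat, oq, Fin.val_one, one_mul]
  rw [dif_neg h0, dif_pos h]
  congr 1; ext; simp

lemma ocat_oq2 {N : ℕ} (i : ℕ) (u₁ u₂ u₃ : Fin (2 * dd i + 1) → ZMod N) (k) :
    ocat i u₁ u₂ u₃ (oq i 2 k) = u₃ k := by
  have h0 : ¬ (2 * (2 * dd i + 1) + (k : ℕ) < 2 * dd i + 1) := by omega
  simp [ocat, oq, h0]

lemma sum_oq (i : ℕ) (f : Fin (2 * dd (i + 1) + 1) → ℕ) :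
    ∑ j, f j = ∑ k, f (oq i 0 k) + ∑ k, f (oq i 1 k) + ∑ k, f (oq i 2 k) := by
  have h : (2 * dd i + 1) + (2 * dd i + 1) + (2 * dd i + 1) = 2 * dd (i + 1) + 1 := by
    have := dd_succ i
    omega
  rw [← (finCongr h).sum_comp, Fin.sum_univ_add, Fin.sum_univ_add]
  congr 1
  · congr 1
    · refine Finset.sum_congr rfl fun k _ => congrArg f (Fin.ext ?_)
      simp [oq]
    · refine Finset.sum_congr rfl fun k _ => congrArg f (Fin.ext ?_)
      simp [oq]; omega
  · refine Finset.sum_congr rfl fun k _ => congrArg f (Fin.ext ?_)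
    simp [oq]; omega

open Classical in
/-- number of edges crossing a colouring -/
noncomputable def crossE {κ : Type*} : (i : ℕ) → κ → κ → κ → (Fin (dd i) → κ) → ℕ
  | 0, α, β, γ, χ => (if χ ⟨0, Nat.one_pos⟩ = α then 0 else 1)
      + (if χ ⟨0, Nat.one_pos⟩ = β then 0 else 1) + (if χ ⟨0, Nat.one_pos⟩ = γ then 0 else 1)
  | (i + 1), α, β, γ, χ =>
      crossE i α β (χ (iz i)) (fun k => χ (ip i 0 k)) +
      crossE i α (χ (iz i)) γ (fun k => χ (ip i 1 k)) +
      crossE i (χ (iz i)) β γ (fun k => χ (ip i 2 k))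

open Classical in
/-- colour classes without terminals -/
noncomputable def parts {κ : Type*} (i : ℕ) (α β γ : κ) (χ : Fin (dd i) → κ) : Finset κ :=
  (Finset.univ.image χ) \ {α, β, γ}

lemma mem_parts {κ : Type*} (i : ℕ) (α β γ : κ) (χ : Fin (dd i) → κ) (x : κ) :
    x ∈ parts i α β γ χ ↔ (∃ k, χ k = x) ∧ x ≠ α ∧ x ≠ β ∧ x ≠ γ := by
  simp [parts]

open Classical in
lemma crossE_ge {κ : Type*} (i : ℕ) : ∀ (α β γ : κ) (χ : Fin (dd i) → κ),
    ((parts i α β γ χ).Nonempty ∨ ¬ (α = β ∧ β = γ)) →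
      2 * (parts i α β γ χ).card + 1 ≤ crossE i α β γ χ := by
  induction i with
  | zero =>
    intro α β γ χ h
    set x := χ ⟨0, Nat.one_pos⟩ with hx
    have hall : ∀ k, χ k = x := fun k => by
      have : k = ⟨0, Nat.one_pos⟩ := Fin.ext (by have := k.isLt; have h1 : dd 0 = 1 := rfl; omega)
      rw [this]
    have hsub : parts 0 α β γ χ ⊆ {x} := by
      intro y hy
      rw [mem_parts] at hy
      obtain ⟨⟨k, hk⟩, _⟩ := hy
      simp [← hk, hall]
    have hcard : (parts 0 α β γ χ).card ≤ 1 := by simpa using Finset.card_le_card hsub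
    simp only [crossE, ← hx]
    by_cases hne : (parts 0 α β γ χ).Nonempty
    · obtain ⟨y, hy⟩ := hne
      have hyx : y = x := by simpa using hsub hy
      rw [mem_parts, hyx] at hy
      simp [hy.2.1, hy.2.2.1, hy.2.2.2]
      omega
    · have h0 : parts 0 α β γ χ = ∅ := Finset.not_nonempty_iff_eq_empty.mp hne
      rw [h0]
      have h' := h.resolve_left hne
      by_cases h1 : x = α
      · by_cases h2 : x = β
        · have h3 : x ≠ γ := fun h3 => h' ⟨h1.symm.trans h2, h2.symm.trans h3⟩
          simp [h3]
        · simp [h2]; omega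
      · simp [h1]; omega
  | succ i ih =>
    intro α β γ χ h
    simp only [crossE]
    set ζ := χ (iz i) with hζ
    set χ1 := fun k => χ (ip i 0 k) with h1
    set χ2 := fun k => χ (ip i 1 k) with h2
    set χ3 := fun k => χ (ip i 2 k) with h3
    have weak : ∀ (α β γ : κ) (χ : Fin (dd i) → κ),
        2 * (parts i α β γ χ).card ≤ crossE i α β γ χ := by
      intro α β γ χ
      by_cases hn : (parts i α β γ χ).Nonempty
      · have := ih α β γ χ (Or.inl hn); omega
      · rw [Finset.not_nonempty_iff_eq_empty.mp hn]; simp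
    have w1 := weak α β ζ χ1
    have w2 := weak α ζ γ χ2
    have w3 := weak ζ β γ χ3
    have i1 := ih α β ζ χ1
    have i2 := ih α ζ γ χ2
    have i3 := ih ζ β γ χ3
    have hmem : ∀ y ∈ parts (i + 1) α β γ χ, y ≠ ζ →
        y ∈ parts i α β ζ χ1 ∪ parts i α ζ γ χ2 ∪ parts i ζ β γ χ3 := by
      intro y hy hyz
      rw [mem_parts] at hy
      obtain ⟨⟨k, hk⟩, ha, hb, hc⟩ := hy
      simp only [Finset.mem_union, mem_parts]
      rcases ip_cases i k with ⟨k', rfl⟩ | ⟨k', rfl⟩ | ⟨k', rfl⟩ | rfl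
      · exact Or.inl (Or.inl ⟨⟨k', hk⟩, ha, hb, hyz⟩)
      · exact Or.inl (Or.inr ⟨⟨k', hk⟩, ha, hyz, hc⟩)
      · exact Or.inr ⟨⟨k', hk⟩, hyz, hb, hc⟩
      · exact absurd hk.symm hyz
    have hU : (parts i α β ζ χ1 ∪ parts i α ζ γ χ2 ∪ parts i ζ β γ χ3).card ≤
        (parts i α β ζ χ1).card + (parts i α ζ γ χ2).card + (parts i ζ β γ χ3).card :=
      (Finset.card_union_le _ _).trans (by gcongr; exact Finset.card_union_le _ _)
    by_cases hz : ζ = α ∨ ζ = β ∨ ζ = γ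
    · have hsub : parts (i + 1) α β γ χ ⊆
          parts i α β ζ χ1 ∪ parts i α ζ γ χ2 ∪ parts i ζ β γ χ3 := by
        intro y hy
        refine hmem y hy ?_
        rw [mem_parts] at hy
        rintro rfl
        tauto
      have hc := (Finset.card_le_card hsub).trans hU
      rcases h with ⟨y, hy⟩ | h
      · have := hsub hy
        simp only [Finset.mem_union] at this
        rcases this with (h | h) | h
        · have := i1 (Or.inl ⟨y, h⟩); omega
        · have := i2 (Or.inl ⟨y, h⟩); omega
        · have := i3 (Or.inl ⟨y, h⟩); omega
      · by_cases e1 : α = β ∧ β = ζ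
        · by_cases e2 : α = ζ ∧ ζ = γ
          · exact absurd ⟨e1.1, e1.2.trans e2.2⟩ h
          · have := i2 (Or.inr e2); omega
        · have := i1 (Or.inr e1); omega
    · push Not at hz
      have hsub : parts (i + 1) α β γ χ ⊆
          insert ζ (parts i α β ζ χ1 ∪ parts i α ζ γ χ2 ∪ parts i ζ β γ χ3) := by
        intro y hy
        by_cases hyz : y = ζ
        · simp [hyz]
        · exact Finset.mem_insert_of_mem (hmem y hy hyz)
      have hc := ((Finset.card_le_card hsub).trans (Finset.card_insert_le _ _))
      have j1 := i1 (Or.inr (fun e => hz.2.1 e.2.symm))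
      have j2 := i2 (Or.inr (fun e => hz.1 e.1.symm))
      have j3 := i3 (Or.inr (fun e => hz.2.1 e.1))
      omega

/-- signs of the variables: `1` for leaves, `-1` for inner variables -/
def sg (N : ℕ) : (i : ℕ) → Fin (dd i) → ZMod N
  | 0 => fun _ => 1
  | (i + 1) => vcat i (sg N i) (sg N i) (sg N i) (-1)

lemma sg_sq (N : ℕ) (i : ℕ) : ∀ k, sg N i k * sg N i k = 1 := by
  induction i with
  | zero => intro k; simp [sg]
  | succ i ih =>
    intro k
    simp only [sg]
    rcases ip_cases i k with ⟨k', rfl⟩ | ⟨k', rfl⟩ | ⟨k', rfl⟩ | rfl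
    · rw [vcat_ip0]; exact ih k'
    · rw [vcat_ip1]; exact ih k'
    · rw [vcat_ip2]; exact ih k'
    · rw [vcat_iz]; ring

open Classical in
lemma crossE_le {N : ℕ} (ψ : ∀ k, (Fin (3 + dd k) → ZMod N) → (Fin (2 * dd k + 1) → ZMod N))
    (hψ : Admissible N ψ) {ι : Type*} (o : ι) (i : ℕ) :
    ∀ (a b c : ι → ZMod N) (v : ι → Fin (dd i) → ZMod N),
      crossE i (fun t => -(a t - a o)) (fun t => -(b t - b o)) (fun t => -(c t - c o))
        (fun k t => sg N i k * (v t k - v o k)) ≤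
      ∑ j, if (∀ t, ψ i (abcv i (a t) (b t) (c t) (v t)) j
        = ψ i (abcv i (a o) (b o) (c o) (v o)) j) then 0 else 1 := by
  induction i with
  | zero =>
    intro a b c v
    have key : ∀ (f : ι → ZMod N) (k : Fin (dd 0)),
        ((fun t => sg N 0 k * (v t k - v o k)) = fun t => -(f t - f o)) ↔
          ∀ t, v t k + f t = v o k + f o := by
      intro f k
      rw [funext_iff]
      refine forall_congr' fun t => ?_
      simp only [sg, one_mul]
      constructor <;> intro h <;> linear_combination h
    simp only [hψ.1, crossE, key]
    have : ∀ f : Fin (2 * dd 0 + 1) → ℕ, ∑ j, f j = f ⟨0, by decide⟩ + f ⟨1, by decide⟩ + f ⟨2, by decide⟩ :=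
      fun f => Fin.sum_univ_three f
    rw [this]
    simp [abcv]
  | succ i ih =>
    intro a b c v
    rw [sum_oq]
    have hψ2 : ∀ t, ψ (i + 1) (abcv (i + 1) (a t) (b t) (c t) (v t)) =
        ocat i (ψ i (abcv i (a t) (b t) (v t (iz i)) (fun k => v t (ip i 0 k))))
          (ψ i (abcv i (a t) (v t (iz i)) (c t) (fun k => v t (ip i 1 k))))
          (ψ i (abcv i (v t (iz i)) (b t) (c t) (fun k => v t (ip i 2 k)))) := by
      intro t
      conv_lhs => rw [vcat_split i (v t)]
      rw [hψ.2]
    simp only [hψ2, ocat_oq0, ocat_oq1, ocat_oq2]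
    simp only [crossE, sg, vcat_ip0, vcat_ip1, vcat_ip2, vcat_iz, neg_one_mul]
    have i1 := ih a b (fun t => v t (iz i)) (fun t k => v t (ip i 0 k))
    have i2 := ih a (fun t => v t (iz i)) c (fun t k => v t (ip i 1 k))
    have i3 := ih (fun t => v t (iz i)) b c (fun t k => v t (ip i 2 k))
    exact Nat.add_le_add (Nat.add_le_add i1 i2) i3

open Classical in
lemma sol_bound {N : ℕ} (hN : 0 < N)
    (ψ : ∀ k, (Fin (3 + dd k) → ZMod N) → (Fin (2 * dd k + 1) → ZMod N))
    (hψ : Admissible N ψ) (i : ℕ) (a b c : ZMod N) (B : Finset (ZMod N))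
    (J : B → Fin (2 * dd i + 1)) :
    Set.ncard {v : Fin (dd i) → ZMod N | ∀ x : B, ψ i (abcv i a b c v) (J x) = x} ≤
      N ^ (dd i - (B.card + 1) / 2) := by
  have : NeZero N := ⟨hN.ne'⟩
  set S := {v : Fin (dd i) → ZMod N | ∀ x : B, ψ i (abcv i a b c v) (J x) = x} with hS
  rcases S.eq_empty_or_nonempty with h0 | ⟨o, ho⟩
  · rw [h0]; simp
  let χ : Fin (dd i) → S → ZMod N := fun k t => sg N i k * (t.1 k - o k)
  have hE := crossE_le ψ hψ (ι := S) ⟨o, ho⟩ i (fun _ => a) (fun _ => b) (fun _ => c) (fun t => t.1)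
  simp only [sub_self, neg_zero] at hE
  change crossE i (fun _ => 0) (fun _ => 0) (fun _ => 0) χ ≤ _ at hE
  set P := parts i (fun _ => 0) (fun _ => 0) (fun _ => 0) χ with hP
  have hcount : S.ncard ≤ N ^ P.card := by
    let F : S → (P → ZMod N) := fun t p => p.1 t
    have hF : Function.Injective F := by
      intro t t' h
      apply Subtype.ext
      funext k
      have hk : χ k t = χ k t' := by
        by_cases hz : χ k = fun _ => 0
        · rw [hz]
        · have hm : χ k ∈ P := by rw [hP, mem_parts]; exact ⟨⟨k, rfl⟩, hz, hz, hz⟩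
          exact congrFun h ⟨χ k, hm⟩
      have hs := sg_sq N i k
      simp only [χ] at hk
      linear_combination sg N i k * hk - (t.1 k - t'.1 k) * hs
    have := Nat.card_le_card_of_injective F hF
    rw [Nat.card_coe_set_eq] at this
    simpa using this
  have hJ : Function.Injective J := by
    intro x y h
    apply Subtype.ext
    rw [← ho x, ← ho y, h]
  have hsum : (∑ j, if (∀ t : S, ψ i (abcv i a b c t.1) j
        = ψ i (abcv i a b c o) j) then 0 else 1) + B.card ≤ 2 * dd i + 1 := by
    have h1 : B.card = (Finset.univ.image J).card := by
      rw [Finset.card_image_of_injective _ hJ]; simp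
    have h2 : (Finset.univ.image J).card =
        ∑ j, if j ∈ Finset.univ.image J then 1 else 0 := by
      rw [Finset.sum_boole, Finset.filter_mem_eq_inter, Finset.univ_inter, Nat.cast_id]
    rw [h1, h2, ← Finset.sum_add_distrib]
    calc _ ≤ ∑ j : Fin (2 * dd i + 1), 1 := by
          refine Finset.sum_le_sum fun j _ => ?_
          by_cases hj : j ∈ Finset.univ.image J
          · obtain ⟨x, -, rfl⟩ := Finset.mem_image.mp hj
            have : ∀ t : S, ψ i (abcv i a b c t.1) (J x) = ψ i (abcv i a b c o) (J x) := by
              intro t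
              rw [t.2 x, ho x]
            rw [if_pos this]; split_ifs <;> simp
          · rw [if_neg hj]; split_ifs <;> simp
      _ = _ := by simp
  refine hcount.trans (Nat.pow_le_pow_right hN ?_)
  rcases P.eq_empty_or_nonempty with h | h
  · rw [h]; simp
  · have := crossE_ge i _ _ _ χ (Or.inl h)
    rw [← hP] at this
    have h3 : crossE i (fun _ => 0) (fun _ => 0) (fun _ => 0) χ + B.card ≤ 2 * dd i + 1 := by
      refine le_trans (Nat.add_le_add_right ?_ _) hsum
      convert hE
    omega

theorem mGen_bound (i : ℕ) :
    ∃ C : ℝ, 0 < C ∧ ∀ᶠ N : ℕ in atTop,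
      ∀ ψ : ∀ k, (Fin (3 + dd k) → ZMod N) → (Fin (2 * dd k + 1) → ZMod N),
        Admissible N ψ →
        ∀ a b c : ZMod N, a ≠ b → a ≠ c → b ≠ c →
          ∀ B : Finset (ZMod N), B.Nonempty → B.card ≤ 2 * dd i + 1 →
            (B.card < 2 * dd i + 1 →
              (mGen i (ψ i) a b c B : ℝ) ≤
                C * (N : ℝ) ^ (dd i - (B.card + 1) / 2 : ℕ)) ∧
            (B.card = 2 * dd i + 1 → (mGen i (ψ i) a b c B : ℝ) ≤ C) := by
  classical
  refine ⟨((2 * dd i + 1) ^ (2 * dd i + 1) : ℕ), by positivity, ?_⟩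
  filter_upwards [eventually_gt_atTop 0] with N hN ψ hψ a b c _ _ _ B _ hB
  have : NeZero N := ⟨hN.ne'⟩
  have main : mGen i (ψ i) a b c B ≤
      (2 * dd i + 1) ^ (2 * dd i + 1) * N ^ (dd i - (B.card + 1) / 2) := by
    have hsub : {v : Fin (dd i) → ZMod N | ¬ DegenerateGen i a b c v ∧
        ∀ x ∈ B, ∃ j : Fin (2 * dd i + 1), ψ i (abcv i a b c v) j = x} ⊆
        ⋃ J : B → Fin (2 * dd i + 1),
          {v : Fin (dd i) → ZMod N | ∀ x : B, ψ i (abcv i a b c v) (J x) = x} := by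
      rintro v ⟨-, hv⟩
      choose J hJ using hv
      exact Set.mem_iUnion.mpr ⟨fun x => J x.1 x.2, fun x => hJ x.1 x.2⟩
    calc mGen i (ψ i) a b c B ≤ _ := Set.ncard_le_ncard hsub (Set.toFinite _)
      _ ≤ ∑ J : B → Fin (2 * dd i + 1),
          {v : Fin (dd i) → ZMod N | ∀ x : B, ψ i (abcv i a b c v) (J x) = x}.ncard :=
        Set.ncard_iUnion_le_of_fintype _
      _ ≤ ∑ J : B → Fin (2 * dd i + 1), N ^ (dd i - (B.card + 1) / 2) :=
        Finset.sum_le_sum fun J _ => sol_bound hN ψ hψ i a b c B J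
      _ = (2 * dd i + 1) ^ B.card * N ^ (dd i - (B.card + 1) / 2) := by simp
      _ ≤ _ := by gcongr; omega
  have main' : (mGen i (ψ i) a b c B : ℝ) ≤
      ((2 * dd i + 1) ^ (2 * dd i + 1) : ℕ) * (N : ℝ) ^ (dd i - (B.card + 1) / 2 : ℕ) := by
    exact_mod_cast main
  refine ⟨fun _ => main', fun h => ?_⟩
  have h0 : dd i - (B.card + 1) / 2 = 0 := by omega
  rwa [h0, pow_zero, mul_one] at main'
end
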